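/- For every integer k ≥ 2 there exists a constant C₁ = C₁(k) > 0 such that: for every K of the form K = 2^m with K ≥ 2^{10k} there exists a constant C₂ = C₂(k, K) < ∞ such that for every δ ∈ (0, 1], |L_δ| ≤ K^{1 + k(k+1)(k+2)/6} · |L_{δK/C₁}| + C₂ · (log₊ δ)^{k−1} · δ^{−k(k+1)(k+2)/6 − 2}. -/

import Mathlib

open MeasureTheory Real Set
open scoped ENNReal

noncomputable section

/-- Index set for multi-indices `β = (β₁, β₂) ∈ ℕ²` with `1 ≤ β₁ + β₂ ≤ k`;
its cardinality is `N = (k+1)(k+2)/2 − 1`. -/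
def Idx (k : ℕ) : Type :=
  {β : Fin (k + 1) × Fin (k + 1) // 1 ≤ (β.1 : ℕ) + (β.2 : ℕ) ∧ (β.1 : ℕ) + (β.2 : ℕ) ≤ k}

instance (k : ℕ) : Fintype (Idx k) := by unfold Idx; infer_instance

/-- The phase polynomial `P(ξ; x) = ∑_{1 ≤ |β| ≤ k} x_β ξ₁^{β₁} ξ₂^{β₂}`. -/
def Pphase (k : ℕ) (x : Idx k → ℝ) (ξ : Fin 2 → ℝ) : ℝ :=
  ∑ β : Idx k, x β * ξ 0 ^ (β.1.1 : ℕ) * ξ 1 ^ (β.1.2 : ℕ)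

/-- `E_k1(x) = ∫_{[0,1]²} e(P(ξ; x)) dξ` with `e(t) = exp(2πit)`. -/
def Eone (k : ℕ) (x : Idx k → ℝ) : ℂ :=
  ∫ ξ in Icc (0 : Fin 2 → ℝ) 1, Complex.exp (2 * Real.pi * Complex.I * (Pphase k x ξ))

/-- `L_δ = {x ∈ ℝ^N : sup_{μ∈ℝ} |{ξ ∈ [0,1]² : μ ≤ P(ξ; x) ≤ μ + 1}| > δ}`. -/
def Lset (k : ℕ) (δ : ℝ) : Set (Idx k → ℝ) :=
  {x | ENNReal.ofReal δ <
    ⨆ μ : ℝ, volume {ξ ∈ Icc (0 : Fin 2 → ℝ) 1 |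
      μ ≤ Pphase k x ξ ∧ Pphase k x ξ ≤ μ + 1}}

/-!
Let `x ∈ L_δ`, witnessed by the level `μ`, and cut the unit square into `K` vertical strips.

If some strip carries more than `δ / (4 (k + 1))` of the sublevel set, stretching that strip to the
whole square puts the substituted coefficients into `L_{δ K / C₁}` with `C₁ = 4 (k + 1)`. The
substitution acts on the coefficients by a triangular matrix of determinant `K ^ (-S)`, where
`S = ∑ β₁ = k (k + 1) (k + 2) / 6`, so the `K` strips account for `K ^ (1 + S) |L_{δ K / C₁}|`.

Otherwise at least `2 (k + 1)` strips carry more than `δ / (2 K) = 2 η` each, and `k + 1` of them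
are pairwise non-adjacent. By sublevel estimates on vertical lines, discarding the points where, for
some `j ≥ 1`, the `j`-th vertical Taylor coefficient of the phase exceeds `H ^ j`, `H = 2 k² / η`,
costs at most `η` in each. Hence `x` lies over a set of measure at least `η ^ (k + 1)` of
configurations of `k + 1` such slow points with separated abscissae, and it remains to bound the
measure of the set of all pairs (coefficients, slow configuration).

For fixed points the coefficients are determined successively, `β₂` decreasing and then `β₁`
decreasing, up to an interval of length `≲ H ^ β₂`. For `β = (0, j + 1)` with `j ≥ 1` there is a
gain: the `j`-th Taylor coefficient is `x_β (j + 1) ξ₂` plus a polynomial of degree at most `k - j`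
in `ξ₁`, which is recovered by interpolation from the first `k + 1 - j` points, so the next point
constrains `x_β` in proportion to its distance `d` from the curve interpolating the previous points,
and the length improves to `H ^ β₂ / (1 + H d)`. Integrated over the points, each of these `k - 1`
gains is worth `≲ log (1 + H) / H`. Dividing the resulting bound
`H ^ S (log (1 + H) / H) ^ (k - 1)` by `η ^ (k + 1)` gives the remaining term.
-/

section ProductMeasure

variable {ι : Type*} [LinearOrder ι] {X : ι → Type*} [∀ i, MeasurableSpace (X i)]
  (μ : ∀ i, Measure (X i)) [∀ i, SigmaFinite (μ i)]

-- Integrating out the least variable of `S` last, the inner integral vanishes off a slice of `s`.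
theorem lmarginal_indicator_le_prod {s : Set (∀ i, X i)} (hs : MeasurableSet s) {w : ι → ℝ≥0∞}
    (h : ∀ i (x : ∀ i, X i), μ i {t | ∃ y ∈ s, (∀ j < i, y j = x j) ∧ y i = t} ≤ w i)
    (S : Finset ι) (x : ∀ i, X i) :
    (∫⋯∫⁻_S, s.indicator 1 ∂μ) x ≤ ∏ i ∈ S, w i := by
  induction S using Finset.induction_on_min generalizing x with
  | empty =>
    rw [lmarginal_empty]
    exact indicator_apply_le' (fun _ => le_rfl) fun _ => zero_le
  | insert a S haS ih =>
    have ha : a ∉ S := fun h => (haS a h).false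
    set A : Set (X a) := {t | ∃ y ∈ s, (∀ j < a, y j = x j) ∧ y a = t}
    have hvanish : ∀ t ∉ toMeasurable (μ a) A,
        (∫⋯∫⁻_S, s.indicator 1 ∂μ) (Function.update x a t) = 0 := fun t ht => by
      refine (lintegral_congr fun z => indicator_of_notMem (fun hz => ht ?_) _).trans
        lintegral_zero
      refine subset_toMeasurable _ _ ⟨_, hz, fun j hj => ?_, ?_⟩
      · have hjS : j ∉ S := fun hjS => (hj.trans (haS j hjS)).false
        simp [Function.updateFinset, hjS, hj.ne]
      · simp [Function.updateFinset, ha]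
    rw [lmarginal_insert _ (measurable_one.indicator hs) ha, Finset.prod_insert ha]
    calc ∫⁻ t, (∫⋯∫⁻_S, s.indicator 1 ∂μ) (Function.update x a t) ∂μ a
        ≤ ∫⁻ t, (toMeasurable (μ a) A).indicator (fun _ => ∏ i ∈ S, w i) t ∂μ a := by
          refine lintegral_mono fun t => ?_
          by_cases ht : t ∈ toMeasurable (μ a) A
          · rw [indicator_of_mem ht]; exact ih _
          · exact (hvanish t ht).le.trans zero_le
      _ = μ a A * ∏ i ∈ S, w i := by
          rw [lintegral_indicator_const (measurableSet_toMeasurable _ _), measure_toMeasurable,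
            mul_comm]
      _ ≤ w a * ∏ i ∈ S, w i := by gcongr; exact h a x

theorem measure_pi_le_prod_of_slice_le [Fintype ι] {s : Set (∀ i, X i)} (hs : MeasurableSet s)
    {w : ι → ℝ≥0∞}
    (h : ∀ i (x : ∀ i, X i), μ i {t | ∃ y ∈ s, (∀ j < i, y j = x j) ∧ y i = t} ≤ w i) :
    Measure.pi μ s ≤ ∏ i, w i := by
  rcases s.eq_empty_or_nonempty with rfl | ⟨x, -⟩
  · simp
  · rw [← lintegral_indicator_one hs, lintegral_eq_lmarginal_univ x]
    exact lmarginal_indicator_le_prod μ hs h Finset.univ x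

theorem lmarginal_prod_le {h : ι → (∀ i, X i) → ℝ≥0∞} (hm : ∀ i, Measurable (h i))
    (hdep : ∀ i, DependsOn (h i) (Iic i)) {M : ι → ℝ≥0∞}
    (hM : ∀ i p, ∫⁻ t, h i (Function.update p i t) ∂μ i ≤ M i) (S : Finset ι) (x : ∀ i, X i) :
    (∫⋯∫⁻_S, fun p => ∏ i ∈ S, h i p ∂μ) x ≤ ∏ i ∈ S, M i := by
  induction S using Finset.induction_on_max with
  | empty => simp
  | insert a S haS ih =>
    have ha : a ∉ S := fun h => (haS a h).false
    have hinner : ∀ p : ∀ i, X i, ∫⁻ t, ∏ i ∈ insert a S, h i (Function.update p a t) ∂μ a ≤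
        (∏ i ∈ S, h i p) * M a := fun p => by
      have hconst : ∀ t, ∏ i ∈ S, h i (Function.update p a t) = ∏ i ∈ S, h i p := fun t =>
        Finset.prod_congr rfl fun i hi => hdep i fun j hj =>
          Function.update_of_ne ((mem_Iic.1 hj).trans_lt (haS i hi)).ne _ _
      simp_rw [Finset.prod_insert ha, hconst, mul_comm (h a _)]
      refine (lintegral_const_mul _ ((hm a).comp (measurable_update p))).trans_le ?_
      gcongr
      exact hM a p
    have hmS : ∀ S : Finset ι, Measurable fun p => ∏ i ∈ S, h i p := fun S =>
      Finset.measurable_prod S fun i _ => hm i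
    rw [lmarginal_insert' _ (hmS _) ha, Finset.prod_insert ha, mul_comm]
    calc (∫⋯∫⁻_S, fun p => ∫⁻ t, ∏ i ∈ insert a S, h i (Function.update p a t) ∂μ a ∂μ) x
        ≤ (∫⋯∫⁻_S, fun p => (∏ i ∈ S, h i p) * M a ∂μ) x := lmarginal_mono hinner x
      _ = (∫⋯∫⁻_S, fun p => ∏ i ∈ S, h i p ∂μ) x * M a :=
          lintegral_mul_const _ ((hmS S).comp measurable_updateFinset)
      _ ≤ (∏ i ∈ S, M i) * M a := by gcongr

theorem lintegral_pi_prod_le [Fintype ι] {h : ι → (∀ i, X i) → ℝ≥0∞}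
    (hm : ∀ i, Measurable (h i)) (hdep : ∀ i, DependsOn (h i) (Iic i)) {M : ι → ℝ≥0∞}
    (hM : ∀ i p, ∫⁻ t, h i (Function.update p i t) ∂μ i ≤ M i) :
    ∫⁻ p, ∏ i, h i p ∂Measure.pi μ ≤ ∏ i, M i := by
  rcases isEmpty_or_nonempty (∀ i, X i) with hX | ⟨⟨x⟩⟩
  · simp [Subsingleton.elim (Measure.pi μ) 0]
  · rw [lintegral_eq_lmarginal_univ x]
    exact lmarginal_prod_le μ hm hdep hM Finset.univ x

end ProductMeasure

theorem volume_le_prod_of_abs_sub_le {ι : Type*} [Fintype ι] [LinearOrder ι] {s : Set (ι → ℝ)}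
    (hs : MeasurableSet s) {w : ι → ℝ}
    (h : ∀ i, ∀ x ∈ s, ∀ y ∈ s, (∀ j < i, x j = y j) → |x i - y i| ≤ w i) :
    volume s ≤ ∏ i, ENNReal.ofReal (w i) := by
  refine measure_pi_le_prod_of_slice_le _ hs fun i _ =>
    (Real.volume_le_diam _).trans (Metric.ediam_le ?_)
  rintro _ ⟨x, hx, hxz, rfl⟩ _ ⟨y, hy, hyz, rfl⟩
  rw [edist_dist, Real.dist_eq]
  exact ENNReal.ofReal_le_ofReal (h i x hx y hy fun j hj => (hxz j hj).trans (hyz j hj).symm)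

open Polynomial in
theorem derivative_hasseDeriv {R : Type*} [Semiring R] (j : ℕ) (p : R[X]) :
    derivative (hasseDeriv j p) = (j + 1) • hasseDeriv (j + 1) p := by
  simpa only [LinearMap.comp_apply, hasseDeriv_one, add_comm 1 j, Nat.choose_one_right,
    LinearMap.smul_apply] using congrArg (fun f => f p) (hasseDeriv_comp (R := R) 1 j)

theorem ofReal_mul_volume_le_volume_image {f f' : ℝ → ℝ} {s : Set ℝ} (hs : MeasurableSet s)
    (hf : ∀ t ∈ s, HasDerivWithinAt f (f' t) s t) (hinj : InjOn f s) {B : ℝ}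
    (hB : ∀ t ∈ s, B ≤ |f' t|) : ENNReal.ofReal B * volume s ≤ volume (f '' s) :=
  calc ENNReal.ofReal B * volume s = ∫⁻ _ in s, ENNReal.ofReal B := (setLIntegral_const _ _).symm
    _ ≤ ∫⁻ t in s, ENNReal.ofReal |f' t| :=
        setLIntegral_mono' hs fun t ht => ENNReal.ofReal_le_ofReal (hB t ht)
    _ = volume (f '' s) := by
        simpa using (lintegral_image_eq_lintegral_abs_deriv_mul hs hf hinj fun _ => 1).symm

section RootsBelow

open Polynomial

/-- The number of distinct real roots of `p` in the open half-line `(-∞, t)`; its level sets cut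
the line into intervals on which a primitive of `p` is injective. -/
def rootsBelow (p : ℝ[X]) (t : ℝ) : ℕ :=
  (p.roots.toFinset.filter (· < t)).card

theorem rootsBelow_mono (p : ℝ[X]) : Monotone (rootsBelow p) := fun _ _ hst =>
  Finset.card_le_card (Finset.monotone_filter_right _ fun _ _ hr => hr.trans_le hst)

theorem rootsBelow_le_natDegree (p : ℝ[X]) (t : ℝ) : rootsBelow p t ≤ p.natDegree :=
  (Finset.card_filter_le _ _).trans ((Multiset.toFinset_card_le _).trans p.card_roots')

theorem injOn_eval_rootsBelow_derivative {p : ℝ[X]} (hp : derivative p ≠ 0) (i : ℕ) :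
    InjOn p.eval {t | rootsBelow (derivative p) t = i} := by
  intro s hs t ht hst
  wlog hlt : s < t generalizing s t
  · rcases (not_lt.1 hlt).eq_or_lt with h | h
    · exact h.symm
    · exact (this ht hs hst.symm h).symm
  obtain ⟨r, hr, hr0⟩ := exists_deriv_eq_zero hlt p.continuous.continuousOn hst
  rw [Polynomial.deriv] at hr0
  have hlt : rootsBelow (derivative p) s < rootsBelow (derivative p) t := by
    refine Finset.card_lt_card (Finset.ssubset_iff_of_subset
      (Finset.monotone_filter_right _ fun _ _ h => h.trans hlt) |>.2 ⟨r, ?_, ?_⟩)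
    · simp [hp, hr0, hr.2]
    · simp [hr.1.le]
  exact absurd (hs.trans ht.symm) hlt.ne

end RootsBelow

section Sublevel

open Polynomial

theorem volume_eval_mem_Icc_and_lt_abs_derivative_le (p : ℝ[X]) {n : ℕ} (hn : p.natDegree ≤ n)
    {u v B : ℝ} (hB : 0 < B) :
    volume {t | p.eval t ∈ Icc u v ∧ B < |(derivative p).eval t|} ≤
      ENNReal.ofReal (n * (v - u) / B) := by
  by_cases hd : p.natDegree = 0
  · simp [derivative_of_natDegree_zero hd, hB.not_gt]
  have hp : derivative p ≠ 0 := fun h => hd (derivative_eq_zero.1 h)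
  let W (i : ℕ) : Set ℝ := {t | (p.eval t ∈ Icc u v ∧ B < |(derivative p).eval t|) ∧
    rootsBelow (derivative p) t = i}
  have hWm (i : ℕ) : MeasurableSet (W i) :=
    ((p.continuous.measurable measurableSet_Icc).inter (measurableSet_lt measurable_const
      (derivative p).continuous.abs.measurable)).inter
      ((rootsBelow_mono _).measurable (measurableSet_singleton i))
  have hW (i : ℕ) : volume (W i) ≤ ENNReal.ofReal ((v - u) / B) := by
    rw [ENNReal.ofReal_div_of_pos hB, ENNReal.le_div_iff_mul_le (.inl (by simpa using hB))
      (.inl ENNReal.ofReal_ne_top), mul_comm]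
    calc ENNReal.ofReal B * volume (W i) ≤ volume (p.eval '' W i) :=
          ofReal_mul_volume_le_volume_image (hWm i) (fun t _ => (p.hasDerivAt t).hasDerivWithinAt)
            ((injOn_eval_rootsBelow_derivative hp i).mono fun t ht => ht.2)
            fun t ht => ht.1.2.le
      _ ≤ volume (Icc u v) := measure_mono (image_subset_iff.2 fun t ht => ht.1.1)
      _ = ENNReal.ofReal (v - u) := Real.volume_Icc
  have hcover : {t | p.eval t ∈ Icc u v ∧ B < |(derivative p).eval t|} ⊆
      ⋃ i ∈ Finset.range n, W i := fun t ht => by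
    simp only [mem_iUnion, Finset.mem_range]
    exact ⟨rootsBelow (derivative p) t, (rootsBelow_le_natDegree _ t).trans_lt
      ((natDegree_derivative_lt hd).trans_le hn), ht, rfl⟩
  calc volume {t | p.eval t ∈ Icc u v ∧ B < |(derivative p).eval t|}
      ≤ ∑ i ∈ Finset.range n, volume (W i) :=
        (measure_mono hcover).trans (measure_biUnion_finset_le _ _)
    _ ≤ ∑ _i ∈ Finset.range n, ENNReal.ofReal ((v - u) / B) := Finset.sum_le_sum fun i _ => hW i
    _ = ENNReal.ofReal (n * (v - u) / B) := by
      rw [Finset.sum_const, Finset.card_range, nsmul_eq_mul, mul_div_assoc,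
        ENNReal.ofReal_mul (Nat.cast_nonneg n), ENNReal.ofReal_natCast]

-- If the first `j` Taylor coefficients are controlled and the next one is not, then the `j`-th one
-- varies fast while staying in an interval of length `2 * H ^ j`.
theorem volume_abs_eval_le_one_and_exists_lt_abs_hasseDeriv_le (p : ℝ[X]) {k : ℕ}
    (hp : p.natDegree ≤ k) {H : ℝ} (hH : 0 < H) (n : ℕ) :
    volume {t | |p.eval t| ≤ 1 ∧ ∃ j ≤ n, H ^ j < |(hasseDeriv j p).eval t|} ≤
      ENNReal.ofReal (n * (2 * k / H)) := by
  induction n with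
  | zero =>
    refine (measure_mono_null ?_ measure_empty).trans_le zero_le
    rintro t ⟨ht, j, hj, hlt⟩
    simp only [Nat.le_zero.1 hj, pow_zero, hasseDeriv_zero'] at hlt
    exact absurd ht hlt.not_ge
  | succ n ih =>
    have hsub : {t | |p.eval t| ≤ 1 ∧ ∃ j ≤ n + 1, H ^ j < |(hasseDeriv j p).eval t|} ⊆
        {t | |p.eval t| ≤ 1 ∧ ∃ j ≤ n, H ^ j < |(hasseDeriv j p).eval t|} ∪
          {t | (hasseDeriv n p).eval t ∈ Icc (-H ^ n) (H ^ n) ∧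
            H ^ (n + 1) < |(derivative (hasseDeriv n p)).eval t|} := by
      rintro t ⟨ht, j, hj, hlt⟩
      by_cases hex : ∃ j ≤ n, H ^ j < |(hasseDeriv j p).eval t|
      · exact .inl ⟨ht, hex⟩
      push Not at hex
      obtain rfl : j = n + 1 := hj.antisymm (Nat.lt_of_not_le fun h => hlt.not_ge (hex j h))
      refine .inr ⟨abs_le.1 (hex n le_rfl), ?_⟩
      rw [derivative_hasseDeriv, eval_smul, nsmul_eq_mul, abs_mul, Nat.abs_cast]
      exact hlt.trans_le (le_mul_of_one_le_left (abs_nonneg _) (by simp))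
    have hstep := volume_eval_mem_Icc_and_lt_abs_derivative_le (hasseDeriv n p)
      ((natDegree_hasseDeriv_le p n).trans ((Nat.sub_le _ _).trans hp)) (u := -H ^ n) (v := H ^ n)
      (pow_pos hH (n + 1))
    refine (measure_mono hsub).trans ((measure_union_le _ _).trans ((add_le_add ih hstep).trans ?_))
    rw [← ENNReal.ofReal_add (by positivity)
      (div_nonneg (mul_nonneg k.cast_nonneg (by linarith [pow_pos hH n])) (by positivity))]
    refine (congrArg ENNReal.ofReal ?_).le
    rw [pow_succ]
    push_cast
    field_simp
    ring

end Sublevel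

section Lagrange

variable {ι : Type*} [DecidableEq ι] {s : Finset ι}

theorem eval_interpolate {F : Type*} [Field F] (v r : ι → F) (x : F) :
    (Lagrange.interpolate s v r).eval x =
      ∑ i ∈ s, r i * ∏ j ∈ s.erase i, (v i - v j)⁻¹ * (x - v j) := by
  simp [Lagrange.interpolate_apply, Polynomial.eval_finsetSum, Lagrange.basis,
    Polynomial.eval_prod, Lagrange.basisDivisor]

theorem eval_interpolate_congr {F : Type*} [Field F] {v v' r r' : ι → F}
    (hv : ∀ i ∈ s, v i = v' i) (hr : ∀ i ∈ s, r i = r' i) (x : F) :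
    (Lagrange.interpolate s v r).eval x = (Lagrange.interpolate s v' r').eval x := by
  rw [eval_interpolate, eval_interpolate]
  refine Finset.sum_congr rfl fun i hi => ?_
  rw [hr i hi, hv i hi]
  exact congrArg _ (Finset.prod_congr rfl fun j hj => by rw [hv j (Finset.mem_of_mem_erase hj)])

theorem measurable_eval_interpolate {α : Type*} [MeasurableSpace α] {v r : α → ι → ℝ} {x : α → ℝ}
    (hv : ∀ i, Measurable fun p => v p i) (hr : ∀ i, Measurable fun p => r p i)
    (hx : Measurable x) : Measurable fun p => (Lagrange.interpolate s (v p) (r p)).eval (x p) := by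
  simp only [eval_interpolate]
  exact Finset.measurable_sum _ fun i _ => (hr i).mul (Finset.measurable_prod _ fun j _ =>
    ((hv i).sub (hv j)).inv.mul (hx.sub (hv j)))

variable {v r : ι → ℝ} {κ M : ℝ}

omit [DecidableEq ι] in
theorem injOn_of_pairwise_inv_le_abs_sub (hκ : 0 < κ)
    (hv : (s : Set ι).Pairwise fun i j => κ⁻¹ ≤ |v i - v j|) : InjOn v s :=
  fun _ hi _ hj hij => by_contra fun hne =>
    (inv_pos.2 hκ).not_ge (by simpa [hij] using hv hi hj hne)

theorem prod_erase_abs_sub_inv_le (hκ : 1 ≤ κ)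
    (hv : (s : Set ι).Pairwise fun i j => κ⁻¹ ≤ |v i - v j|) {n : ℕ} (hs : s.card ≤ n + 1)
    {i : ι} (hi : i ∈ s) : ∏ j ∈ s.erase i, |v i - v j|⁻¹ ≤ κ ^ n :=
  calc ∏ j ∈ s.erase i, |v i - v j|⁻¹ ≤ ∏ _j ∈ s.erase i, κ :=
        Finset.prod_le_prod (fun _ _ => by positivity) fun j hj =>
          inv_le_of_inv_le₀ (by positivity)
            (hv hi (Finset.mem_of_mem_erase hj) (Finset.ne_of_mem_erase hj).symm)
    _ = κ ^ (s.erase i).card := Finset.prod_const κ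
    _ ≤ κ ^ n := pow_le_pow_right₀ hκ (by rw [Finset.card_erase_of_mem hi]; omega)

omit [DecidableEq ι] in
theorem abs_coeff_le_of_abs_eval_le (hκ : 1 ≤ κ)
    (hv : (s : Set ι).Pairwise fun i j => κ⁻¹ ≤ |v i - v j|) {n : ℕ} (hs : s.card = n + 1)
    {q : Polynomial ℝ} (hq : q.natDegree ≤ n) (hM : ∀ i ∈ s, |q.eval (v i)| ≤ M) :
    |q.coeff n| ≤ (n + 1) * κ ^ n * M := by
  classical
  have hdeg : q.degree < s.card :=
    (Polynomial.degree_le_of_natDegree_le hq).trans_lt (by rw [hs]; exact_mod_cast n.lt_succ_self)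
  have hsum := Lagrange.coeff_eq_sum
    (injOn_of_pairwise_inv_le_abs_sub (zero_lt_one.trans_le hκ) hv) hdeg
  rw [hs, Nat.add_sub_cancel] at hsum
  rw [hsum]
  calc |∑ i ∈ s, q.eval (v i) / ∏ j ∈ s.erase i, (v i - v j)|
      ≤ ∑ i ∈ s, |q.eval (v i)| * ∏ j ∈ s.erase i, |v i - v j|⁻¹ := by
        refine (Finset.abs_sum_le_sum_abs _ _).trans_eq (Finset.sum_congr rfl fun i _ => ?_)
        rw [abs_div, Finset.abs_prod, div_eq_mul_inv, Finset.prod_inv_distrib]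
    _ ≤ ∑ _i ∈ s, M * κ ^ n := Finset.sum_le_sum fun i hi =>
        mul_le_mul (hM i hi) (prod_erase_abs_sub_inv_le hκ hv hs.le hi)
          (Finset.prod_nonneg fun _ _ => by positivity) ((abs_nonneg _).trans (hM i hi))
    _ = (n + 1) * κ ^ n * M := by
        rw [Finset.sum_const, hs, nsmul_eq_mul]
        push_cast
        ring

theorem abs_eval_interpolate_le (hκ : 1 ≤ κ)
    (hv : (s : Set ι).Pairwise fun i j => κ⁻¹ ≤ |v i - v j|) {n : ℕ} (hs : s.card ≤ n + 1)
    {x : ℝ} (hx : ∀ i ∈ s, |x - v i| ≤ 1) (hM : 0 ≤ M) (hr : ∀ i ∈ s, |r i| ≤ M) :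
    |(Lagrange.interpolate s v r).eval x| ≤ (n + 1) * κ ^ n * M := by
  rw [eval_interpolate]
  calc |∑ i ∈ s, r i * ∏ j ∈ s.erase i, (v i - v j)⁻¹ * (x - v j)|
      ≤ ∑ i ∈ s, |r i| * ((∏ j ∈ s.erase i, |v i - v j|⁻¹) * ∏ j ∈ s.erase i, |x - v j|) := by
        refine (Finset.abs_sum_le_sum_abs _ _).trans_eq (Finset.sum_congr rfl fun i _ => ?_)
        rw [abs_mul, Finset.abs_prod, ← Finset.prod_mul_distrib]
        simp only [abs_mul, abs_inv]
    _ ≤ ∑ _i ∈ s, M * (κ ^ n * 1) := Finset.sum_le_sum fun i hi => by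
        gcongr
        · exact hr i hi
        · exact prod_erase_abs_sub_inv_le hκ hv hs hi
        · exact Finset.prod_le_one (fun _ _ => abs_nonneg _) fun j hj =>
            hx j (Finset.mem_of_mem_erase hj)
    _ = s.card * (κ ^ n * M) := by rw [Finset.sum_const, nsmul_eq_mul]; ring
    _ ≤ (n + 1) * κ ^ n * M := by
        rw [mul_assoc]
        gcongr
        exact_mod_cast hs

end Lagrange

section UnitInterval

theorem lintegral_comp_abs_sub_le {g : ℝ → ℝ≥0∞} (hg : AntitoneOn g (Ici 0)) (s : ℝ) :
    ∫⁻ t in Icc (0 : ℝ) 1, g |t - s| ≤ 2 * ∫⁻ t in Icc (0 : ℝ) 1, g t := by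
  set r : ℝ := (projIcc 0 1 zero_le_one s : ℝ)
  have hr : r ∈ Icc (0 : ℝ) 1 := (projIcc 0 1 zero_le_one s).2
  have hclamp : ∀ t ∈ Icc (0 : ℝ) 1, g |t - s| ≤ g |t - r| := fun t ht =>
    hg (mem_Ici.2 (abs_nonneg _)) (mem_Ici.2 (abs_nonneg _)) <| by
      simpa [projIcc_of_mem _ ht] using abs_projIcc_sub_projIcc (c := t) (d := s) (zero_le_one' ℝ)
  have hleft : ∫⁻ t in Icc 0 r, g |t - r| = ∫⁻ u in Icc 0 r, g u := by
    have h := (Measure.measurePreserving_sub_left volume r).setLIntegral_comp_preimage_emb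
      (Homeomorph.subLeft r).measurableEmbedding g (Icc 0 r)
    rw [preimage_const_sub_Icc, sub_self, sub_zero] at h
    rw [← h]
    refine setLIntegral_congr_fun measurableSet_Icc fun t ht => ?_
    simp only [abs_of_nonpos (sub_nonpos.2 ht.2), neg_sub]
  have hright : ∫⁻ t in Icc r 1, g |t - r| = ∫⁻ u in Icc 0 (1 - r), g u := by
    have h := (measurePreserving_sub_right volume r).setLIntegral_comp_preimage_emb
      (measurableEmbedding_subRight r) g (Icc 0 (1 - r))
    rw [preimage_sub_const_Icc, zero_add, sub_add_cancel] at h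
    rw [← h]
    refine setLIntegral_congr_fun measurableSet_Icc fun t ht => ?_
    simp only [abs_of_nonneg (sub_nonneg.2 ht.1)]
  calc ∫⁻ t in Icc (0 : ℝ) 1, g |t - s|
      ≤ ∫⁻ t in Icc 0 r ∪ Icc r 1, g |t - r| := by
        rw [Icc_union_Icc_eq_Icc hr.1 hr.2]
        exact setLIntegral_mono' measurableSet_Icc hclamp
    _ ≤ (∫⁻ t in Icc 0 r, g |t - r|) + ∫⁻ t in Icc r 1, g |t - r| := lintegral_union_le _ _ _
    _ = (∫⁻ u in Icc 0 r, g u) + ∫⁻ u in Icc 0 (1 - r), g u := by rw [hleft, hright]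
    _ ≤ 2 * ∫⁻ t in Icc (0 : ℝ) 1, g t := by
        rw [two_mul]
        exact add_le_add (lintegral_mono_set (Icc_subset_Icc_right hr.2))
          (lintegral_mono_set (Icc_subset_Icc_right (by linarith [hr.1])))

theorem lintegral_Icc_ofReal_inv_one_add_mul {H : ℝ} (hH : 0 < H) :
    ∫⁻ t in Icc (0 : ℝ) 1, ENNReal.ofReal (1 + H * t)⁻¹ = ENNReal.ofReal (log (1 + H) / H) := by
  have hpos : ∀ t ∈ Icc (0 : ℝ) 1, 0 < 1 + H * t := fun t ht =>
    add_pos_of_pos_of_nonneg one_pos (mul_nonneg hH.le ht.1)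
  have hcont : ContinuousOn (fun t => (1 + H * t)⁻¹) (Icc 0 1) :=
    ContinuousOn.inv₀ (by fun_prop) fun t ht => (hpos t ht).ne'
  rw [← ofReal_integral_eq_lintegral_ofReal hcont.integrableOn_Icc
    ((ae_restrict_iff' measurableSet_Icc).2 (ae_of_all _ fun t ht => (inv_pos.2 (hpos t ht)).le)),
    integral_Icc_eq_integral_Ioc, ← intervalIntegral.integral_of_le zero_le_one,
    intervalIntegral.integral_comp_add_mul (fun t => t⁻¹) hH.ne',
    integral_inv_of_pos (by simp) (by simpa using hpos 1 (by simp))]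
  congr 1
  simp [div_eq_inv_mul]

theorem lintegral_Icc_ofReal_inv_one_add_mul_abs_sub_le {H : ℝ} (hH : 0 < H) (s : ℝ) :
    ∫⁻ t in Icc (0 : ℝ) 1, ENNReal.ofReal (1 + H * |t - s|)⁻¹ ≤
      ENNReal.ofReal (2 * log (1 + H) / H) := by
  have hanti : AntitoneOn (fun t => ENNReal.ofReal (1 + H * t)⁻¹) (Ici 0) :=
    fun t ht u _ htu => ENNReal.ofReal_le_ofReal <| by
      have := mul_nonneg hH.le (mem_Ici.1 ht)
      gcongr
  refine (lintegral_comp_abs_sub_le hanti s).trans_eq ?_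
  rw [lintegral_Icc_ofReal_inv_one_add_mul hH, mul_div_assoc, ENNReal.ofReal_mul zero_le_two,
    ENNReal.ofReal_ofNat]

end UnitInterval

theorem sum_le_card_filter_lt_nsmul_add {ι R : Type*} [AddCommMonoid R] [LinearOrder R]
    [IsOrderedAddMonoid R] [CanonicallyOrderedAdd R] (s : Finset ι) {f : ι → R} {m M : R}
    (hf : ∀ i ∈ s, f i ≤ M) :
    ∑ i ∈ s, f i ≤ (s.filter (m < f ·)).card • M + s.card • m :=
  calc ∑ i ∈ s, f i ≤ ∑ i ∈ s, ((if m < f i then M else 0) + m) :=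
        Finset.sum_le_sum fun i hi => by
          split_ifs with h
          · exact (hf i hi).trans le_self_add
          · exact (not_lt.1 h).trans le_add_self
    _ = (s.filter (m < f ·)).card • M + s.card • m := by
        rw [Finset.sum_add_distrib, ← Finset.sum_filter, Finset.sum_const, Finset.sum_const]

theorem exists_mem_forall_lt_add_two_le (s : Finset ℕ) {n : ℕ} (h : 2 * n ≤ s.card) :
    ∃ f : Fin n → ℕ, (∀ i, f i ∈ s) ∧ ∀ i j, i < j → f i + 2 ≤ f j := by
  let e := s.orderEmbOfFin rfl
  refine ⟨fun i => e ⟨2 * i, by omega⟩, fun i => s.orderEmbOfFin_mem rfl _, fun i j hij => ?_⟩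
  rw [Fin.lt_def] at hij
  have h₁ : e ⟨2 * i, by omega⟩ < e ⟨2 * i + 1, by omega⟩ := e.strictMono (by simp [Fin.lt_def])
  have h₂ : e ⟨2 * i + 1, by omega⟩ < e ⟨2 * j, by omega⟩ :=
    e.strictMono (by simp only [Fin.lt_def]; omega)
  dsimp only
  omega

theorem measure_prod_le_mul {α β : Type*} [MeasurableSpace α] [MeasurableSpace β] {μ : Measure α}
    {ν : Measure β} [SFinite ν] {s : Set (α × β)} (hs : MeasurableSet s) {t : Set α}
    (ht : MeasurableSet t) (hst : ∀ q ∈ s, q.1 ∈ t) {c : ℝ≥0∞}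
    (hc : ∀ a, ν (Prod.mk a ⁻¹' s) ≤ c) : (μ.prod ν) s ≤ c * μ t := by
  rw [Measure.prod_apply hs, ← lintegral_indicator_const ht]
  refine lintegral_mono fun a => ?_
  by_cases ha : a ∈ t
  · rw [indicator_of_mem ha]
    exact hc a
  · exact (measure_mono_null (fun b hb => ha (hst (a, b) hb)) measure_empty).trans_le zero_le

theorem measurePreserving_mul_add {r : ℝ} (hr : 0 < r) (c : ℝ) :
    MeasurePreserving (fun s => r * s + c) volume (ENNReal.ofReal r⁻¹ • volume) :=
  (measurePreserving_add_right volume c |>.smul_measure (ENNReal.ofReal r⁻¹)).comp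
    ⟨measurable_const_mul r, by rw [Real.map_volume_mul_left hr.ne', abs_of_pos (inv_pos.2 hr)]⟩

theorem volume_preimage_mul_add_prodMap {r : ℝ} (hr : 0 < r) (c : ℝ) {s : Set (ℝ × ℝ)}
    (hs : MeasurableSet s) :
    volume (Prod.map (fun a => r * a + c) id ⁻¹' s) = ENNReal.ofReal r⁻¹ * volume s := by
  have h := (measurePreserving_mul_add hr c).prod (MeasurePreserving.id (volume : Measure ℝ))
  rw [Measure.prod_smul_left] at h
  exact h.measure_preimage hs.nullMeasurableSet

theorem log_one_add_natCast_mul_le (c : ℕ) {t : ℝ} (ht : 0 ≤ t) :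
    log (1 + c * t) ≤ c * log (1 + t) := by
  rw [← log_pow]
  exact log_le_log (by positivity) (one_add_mul_le_pow (by linarith) c)

section IdxSums

theorem sum_Idx {M : Type*} [AddCommMonoid M] (k : ℕ) (f : ℕ → ℕ → M) :
    ∑ β : Idx k, f β.1.1 β.1.2 + f 0 0 =
      ∑ j ∈ Finset.range (k + 1), ∑ i ∈ Finset.range (k + 1 - j), f i j := by
  rw [Finset.sum_sigma', ← Finset.sum_erase_add (Finset.sigma _ _) _
    (Finset.mem_sigma.2 (by simp) : (⟨0, 0⟩ : Σ _ : ℕ, ℕ) ∈ _)]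
  congr 1
  refine Finset.sum_bij (fun β _ => ⟨β.1.2, β.1.1⟩) (fun β _ => ?_) (fun β _ γ _ h => ?_)
    (fun q hq => ?_) fun _ _ => rfl
  · have := β.2
    simp only [Finset.mem_erase, Finset.mem_sigma, Finset.mem_range, ne_eq, Sigma.mk.injEq,
      heq_eq_eq]
    omega
  · simp only [Sigma.mk.injEq, heq_eq_eq, Fin.val_inj] at h
    exact Subtype.ext (Prod.ext h.2 h.1)
  · obtain ⟨j, i⟩ := q
    simp only [Finset.mem_erase, Finset.mem_sigma, Finset.mem_range, ne_eq, Sigma.mk.injEq,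
      heq_eq_eq] at hq
    exact ⟨⟨(⟨i, by omega⟩, ⟨j, by omega⟩), by simp only; omega⟩, Finset.mem_univ _, rfl⟩

theorem six_mul_sum_mul_sub (n : ℕ) :
    6 * ∑ j ∈ Finset.range (n + 1), (n + 1 - j) * j = n * (n + 1) * (n + 2) := by
  induction n with
  | zero => simp
  | succ n ih =>
    have hsucc : ∑ j ∈ Finset.range (n + 1), (n + 1 + 1 - j) * j =
        ∑ j ∈ Finset.range (n + 1), (n + 1 - j) * j + ∑ j ∈ Finset.range (n + 1), j := by
      rw [← Finset.sum_add_distrib]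
      refine Finset.sum_congr rfl fun j hj => ?_
      rw [Nat.sub_add_comm (Finset.mem_range.1 hj).le, add_one_mul]
    have hgauss := Finset.sum_range_id_mul_two (n + 1)
    rw [Nat.add_sub_cancel] at hgauss
    rw [Finset.sum_range_succ, hsucc, Nat.add_sub_cancel_left]
    linarith

theorem six_mul_sum_Idx_snd (k : ℕ) :
    6 * ∑ β : Idx k, (β.1.2 : ℕ) = k * (k + 1) * (k + 2) := by
  rw [← six_mul_sum_mul_sub, ← add_zero (∑ β : Idx k, _), sum_Idx k fun _ j => j]
  simp

theorem sum_Idx_fst (k : ℕ) : ∑ β : Idx k, (β.1.1 : ℕ) = ∑ β : Idx k, (β.1.2 : ℕ) := by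
  have hswap : Function.Involutive fun β : Idx k =>
      (⟨β.1.swap, by have := β.2; simp only [Prod.fst_swap, Prod.snd_swap]; omega⟩ : Idx k) :=
    fun β => Subtype.ext β.1.swap_swap
  exact Fintype.sum_bijective _ hswap.bijective _ _ fun _ => rfl

end IdxSums

/-- Multi-indices ordered by decreasing `β₂`, then by decreasing `β₁`: the order in which the
coefficients of a phase are recovered from its vertical Taylor coefficients. -/
instance (k : ℕ) : LinearOrder (Idx k) :=
  LinearOrder.lift' (fun β => toLex (OrderDual.toDual β.1.2, OrderDual.toDual β.1.1)) fun _ _ h =>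
    Subtype.ext (Prod.ext (congrArg (fun a => (ofLex a).2.ofDual) h)
      (congrArg (fun a => (ofLex a).1.ofDual) h))

theorem Idx.lt_iff {k : ℕ} {β γ : Idx k} :
    β < γ ↔ γ.1.2 < β.1.2 ∨ γ.1.2 = β.1.2 ∧ γ.1.1 < β.1.1 := by
  refine Prod.Lex.toLex_lt_toLex.trans ?_
  simp [eq_comm]

theorem continuous_Pphase (k : ℕ) :
    Continuous fun q : (Idx k → ℝ) × ℝ × ℝ => Pphase k q.1 ![q.2.1, q.2.2] := by
  unfold Pphase
  fun_prop

section Substitution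

/-- The matrix by which the substitution `ξ₁ ↦ r ξ₁ + c` acts on the coefficients of a phase. -/
def substMatrix (k : ℕ) (r c : ℝ) : Matrix (Idx k) (Idx k) ℝ := fun γ β =>
  if γ.1.2 = β.1.2 then
    (r ^ (γ.1.1 : ℕ) * c ^ (β.1.1 - γ.1.1 : ℕ) * (β.1.1 : ℕ).choose γ.1.1) else 0

theorem sum_substMatrix_mul (k : ℕ) (r c s t : ℝ) (β : Idx k) :
    ∑ γ : Idx k, substMatrix k r c γ β * s ^ (γ.1.1 : ℕ) * t ^ (γ.1.2 : ℕ) +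
      c ^ (β.1.1 : ℕ) * 0 ^ (β.1.2 : ℕ) = (r * s + c) ^ (β.1.1 : ℕ) * t ^ (β.1.2 : ℕ) := by
  let f (i j : ℕ) : ℝ := if j = β.1.2 then
    ((r * s) ^ i * c ^ (β.1.1 - i : ℕ) * (β.1.1 : ℕ).choose i) * t ^ (β.1.2 : ℕ) else 0
  have hterm (γ : Idx k) :
      substMatrix k r c γ β * s ^ (γ.1.1 : ℕ) * t ^ (γ.1.2 : ℕ) = f γ.1.1 γ.1.2 := by
    simp only [substMatrix, f, Fin.val_inj]
    split_ifs with h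
    · rw [h, mul_pow]
      ring
    · simp
  have hzero : c ^ (β.1.1 : ℕ) * 0 ^ (β.1.2 : ℕ) = f 0 0 := by
    rcases eq_or_ne (β.1.2 : ℕ) 0 with h | h
    · simp [f, h]
    · simp [f, zero_pow h, if_neg h.symm]
  have hbeta := β.2
  rw [hzero, Finset.sum_congr rfl fun γ _ => hterm γ, sum_Idx k f, add_pow, Finset.sum_mul,
    Finset.sum_eq_single (β.1.2 : ℕ)]
  · simp only [f, if_true]
    refine (Finset.sum_subset (Finset.range_subset_range.2 (by omega)) fun i _ hi => ?_).symm
    rw [Nat.choose_eq_zero_of_lt (by simpa using hi)]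
    simp
  · intro j _ hj
    simp [f, hj]
  · simp only [Finset.mem_range]
    omega

theorem Pphase_mul_add (k : ℕ) (r c : ℝ) (x : Idx k → ℝ) (s t : ℝ) :
    Pphase k x ![r * s + c, t] =
      Pphase k (Matrix.toLin' (substMatrix k r c) x) ![s, t] + Pphase k x ![c, 0] := by
  simp only [Pphase, Matrix.toLin'_apply, Matrix.mulVec, dotProduct, Finset.sum_mul,
    Matrix.cons_val_zero, Matrix.cons_val_one]
  rw [Finset.sum_comm, ← Finset.sum_add_distrib]
  refine Finset.sum_congr rfl fun β _ => ?_
  rw [mul_assoc (x β), ← sum_substMatrix_mul, mul_add, Finset.mul_sum]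
  congr 1
  · exact Finset.sum_congr rfl fun γ _ => by ring
  · ring

theorem det_substMatrix (k : ℕ) (r c : ℝ) :
    (substMatrix k r c).det = r ^ ∑ β : Idx k, (β.1.1 : ℕ) := by
  have hlow : (substMatrix k r c).IsLowerTriangular := fun β γ h => by
    unfold substMatrix
    split_ifs with heq
    · have hlt : γ.1.1 < β.1.1 := by
        rcases Idx.lt_iff.1 h with h | h
        · exact absurd heq h.ne'
        · exact h.2
      rw [Nat.choose_eq_zero_of_lt hlt, Nat.cast_zero, mul_zero]
    · rfl
  rw [Matrix.det_of_isLowerTriangular _ hlow, ← Finset.prod_pow_eq_pow_sum]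
  simp [substMatrix]

theorem volume_preimage_substMatrix (k : ℕ) {r : ℝ} (hr : 0 < r) (c : ℝ) (L : Set (Idx k → ℝ)) :
    volume (Matrix.toLin' (substMatrix k r c) ⁻¹' L) =
      ENNReal.ofReal r⁻¹ ^ (∑ β : Idx k, (β.1.1 : ℕ)) * volume L := by
  have hdet : LinearMap.det (Matrix.toLin' (substMatrix k r c)) =
      r ^ ∑ β : Idx k, (β.1.1 : ℕ) := by
    rw [LinearMap.det_toLin', det_substMatrix]
  rw [Measure.addHaar_preimage_linearMap _ (by rw [hdet]; positivity), hdet,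
    abs_of_pos (by positivity), ← inv_pow, ENNReal.ofReal_pow (by positivity)]

end Substitution

section TaylorCoefficients

/-- The polynomial `t ↦ P((a, t); x)`. -/
def fiberPoly (k : ℕ) (x : Idx k → ℝ) (a : ℝ) : Polynomial ℝ :=
  ∑ β : Idx k, Polynomial.monomial β.1.2 (x β * a ^ (β.1.1 : ℕ))

theorem natDegree_fiberPoly_le (k : ℕ) (x : Idx k → ℝ) (a : ℝ) :
    (fiberPoly k x a).natDegree ≤ k :=
  Polynomial.natDegree_sum_le_of_forall_le _ _ fun β _ =>
    (Polynomial.natDegree_monomial_le _).trans (Nat.lt_succ_iff.1 β.1.2.2)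

/-- The vertical Taylor coefficient `∂₂ʲ P / j!` of the phase `P(·; x)` at the point `(a, t)`. -/
def taylorCoeff (k : ℕ) (x : Idx k → ℝ) (j : ℕ) (a t : ℝ) : ℝ :=
  (Polynomial.hasseDeriv j (fiberPoly k x a)).eval t

theorem taylorCoeff_eq_sum (k : ℕ) (x : Idx k → ℝ) (j : ℕ) (a t : ℝ) :
    taylorCoeff k x j a t =
      ∑ β : Idx k, x β * a ^ (β.1.1 : ℕ) * ((β.1.2 : ℕ).choose j * t ^ (β.1.2 - j : ℕ)) := by
  rw [taylorCoeff, fiberPoly, map_sum, Polynomial.eval_finsetSum]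
  refine Finset.sum_congr rfl fun β _ => ?_
  rw [Polynomial.hasseDeriv_monomial, Polynomial.eval_monomial]
  ring

theorem taylorCoeff_zero (k : ℕ) (x : Idx k → ℝ) (a t : ℝ) :
    taylorCoeff k x 0 a t = Pphase k x ![a, t] := by
  simp [taylorCoeff_eq_sum, Pphase, mul_assoc]

theorem taylorCoeff_sub (k : ℕ) (x y : Idx k → ℝ) (j : ℕ) (a t : ℝ) :
    taylorCoeff k (x - y) j a t = taylorCoeff k x j a t - taylorCoeff k y j a t := by
  simp only [taylorCoeff_eq_sum, ← Finset.sum_sub_distrib, Pi.sub_apply, sub_mul]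

theorem continuous_taylorCoeff (k j : ℕ) :
    Continuous fun q : (Idx k → ℝ) × ℝ × ℝ => taylorCoeff k q.1 j q.2.1 q.2.2 := by
  simp only [taylorCoeff_eq_sum]
  fun_prop

/-- The polynomial in `ξ₁` multiplying `ξ₂ ^ j` in `P(ξ; x)`. -/
def layerPoly (k : ℕ) (x : Idx k → ℝ) (j : ℕ) : Polynomial ℝ :=
  ∑ β : Idx k, if β.1.2 = j then Polynomial.monomial β.1.1 (x β) else 0

theorem coeff_layerPoly (k : ℕ) (x : Idx k → ℝ) (β : Idx k) :
    (layerPoly k x β.1.2).coeff β.1.1 = x β := by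
  rw [layerPoly, Polynomial.finsetSum_coeff, Finset.sum_eq_single β _ (by simp)]
  · simp
  · intro γ _ hne
    split_ifs with h₂
    · exact Polynomial.coeff_monomial_of_ne _ fun h₁ =>
        hne (Subtype.ext (Prod.ext (Fin.ext h₁.symm) (Fin.ext h₂)))
    · simp

variable {k : ℕ} {z : Idx k → ℝ}

theorem natDegree_layerPoly_le {j n : ℕ}
    (hz : ∀ β : Idx k, β.1.2 = j → n < β.1.1 → z β = 0) : (layerPoly k z j).natDegree ≤ n := by
  refine Polynomial.natDegree_sum_le_of_forall_le _ _ fun β _ => ?_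
  split_ifs with hj
  · rcases le_or_gt (β.1.1 : ℕ) n with hn | hn
    · exact (Polynomial.natDegree_monomial_le _).trans hn
    · simp [hz β hj hn]
  · simp

theorem taylorCoeff_eq_of_forall_succ_lt {j : ℕ} (hz : ∀ β : Idx k, j + 1 < β.1.2 → z β = 0)
    (a t : ℝ) : taylorCoeff k z j a t =
      (layerPoly k z j).eval a + (j + 1) * t * (layerPoly k z (j + 1)).eval a := by
  simp only [taylorCoeff_eq_sum, layerPoly, Polynomial.eval_finsetSum, Finset.mul_sum,
    ← Finset.sum_add_distrib]
  refine Finset.sum_congr rfl fun β _ => ?_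
  obtain hlt | heq | heq | hgt : (β.1.2 : ℕ) < j ∨ (β.1.2 : ℕ) = j ∨ (β.1.2 : ℕ) = j + 1 ∨
      j + 1 < (β.1.2 : ℕ) := by omega
  · simp [Nat.choose_eq_zero_of_lt hlt, hlt.ne, (hlt.trans j.lt_succ_self).ne]
  · simp [heq]
  · simp only [heq, Nat.choose_succ_self_right, Nat.add_sub_cancel_left, pow_one, if_true,
      j.succ_ne_self, if_false, Polynomial.eval_monomial, Polynomial.eval_zero]
    push_cast
    ring
  · simp [hz β hgt]

theorem taylorCoeff_eq_eval_layerPoly {j : ℕ} (hz : ∀ β : Idx k, j < β.1.2 → z β = 0) (a t : ℝ) :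
    taylorCoeff k z j a t = (layerPoly k z j).eval a := by
  have hlayer : layerPoly k z (j + 1) = 0 := Finset.sum_eq_zero fun β _ => by
    split_ifs with hj
    · rw [hz β (by omega), map_zero]
    · rfl
  rw [taylorCoeff_eq_of_forall_succ_lt fun β hβ => hz β (j.lt_succ_self.trans hβ), hlayer,
    Polynomial.eval_zero, mul_zero, add_zero]

end TaylorCoefficients

section Strips

/-- The `n`-th of the `K` closed intervals of equal length covering `[0, 1]`. -/
def strip (K n : ℕ) : Set ℝ := Icc ((n : ℝ) / K) ((n + 1) / K)

variable {K : ℕ}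

theorem measurableSet_strip (K n : ℕ) : MeasurableSet (strip K n) := measurableSet_Icc

theorem Icc_subset_iUnion_strip (hK : 0 < K) :
    Icc (0 : ℝ) 1 ⊆ ⋃ n ∈ Finset.range K, strip K n := by
  intro a ha
  have hK' : (0 : ℝ) < K := Nat.cast_pos.2 hK
  simp only [mem_iUnion, Finset.mem_range, strip, mem_Icc, div_le_iff₀ hK', le_div_iff₀ hK',
    exists_prop]
  rcases ha.2.lt_or_eq with h | rfl
  · have hnonneg : 0 ≤ a * K := mul_nonneg ha.1 hK'.le
    exact ⟨⌊a * K⌋₊, (Nat.floor_lt hnonneg).2 (mul_lt_of_lt_one_left hK' h),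
      Nat.floor_le hnonneg, (Nat.lt_floor_add_one _).le⟩
  · exact ⟨K - 1, by omega, by rw [Nat.cast_sub hK]; constructor <;> simp⟩

theorem strip_subset_Icc {n : ℕ} (hn : n < K) : strip K n ⊆ Icc 0 1 :=
  Icc_subset_Icc (by positivity)
    (div_le_one_of_le₀ (by exact_mod_cast hn) K.cast_nonneg)

theorem preimage_mul_add_strip (hK : 0 < K) (n : ℕ) :
    (fun s : ℝ => (K : ℝ)⁻¹ * s + n / K) ⁻¹' strip K n = Icc 0 1 := by
  have hK' : (0 : ℝ) < K := Nat.cast_pos.2 hK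
  ext s
  simp only [mem_preimage, strip, mem_Icc, inv_mul_eq_div, ← add_div,
    div_le_div_iff_of_pos_right hK', add_comm s, le_add_iff_nonneg_right, add_le_add_iff_left]

theorem inv_le_abs_sub_of_mem_strip {m n : ℕ} (hmn : m + 2 ≤ n) {a b : ℝ}
    (ha : a ∈ strip K m) (hb : b ∈ strip K n) : (K : ℝ)⁻¹ ≤ |a - b| := by
  have hmn' : (m : ℝ) + 2 ≤ n := by exact_mod_cast hmn
  calc (K : ℝ)⁻¹ ≤ (n - (m + 1)) / K := by
        rw [inv_eq_one_div]
        gcongr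
        linarith
    _ = n / K - (m + 1) / K := sub_div _ _ _
    _ ≤ b - a := sub_le_sub hb.1 ha.2
    _ ≤ |a - b| := by rw [abs_sub_comm]; exact le_abs_self _

end Strips

section SublevelSets

/-- The part of `{P(·; x) ∈ [μ, μ + 1]}` in the vertical strip `J × [0, 1]`. -/
def sublevel (k : ℕ) (x : Idx k → ℝ) (μ : ℝ) (J : Set ℝ) : Set (ℝ × ℝ) :=
  J ×ˢ Icc 0 1 ∩ {q | Pphase k x ![q.1, q.2] ∈ Icc μ (μ + 1)}

variable {k : ℕ} {x : Idx k → ℝ} {μ δ : ℝ} {J : Set ℝ} {K : ℕ}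

theorem measurableSet_sublevel (hJ : MeasurableSet J) : MeasurableSet (sublevel k x μ J) := by
  have hP : Continuous fun q : ℝ × ℝ => Pphase k x ![q.1, q.2] :=
    (continuous_Pphase k).comp (Continuous.prodMk_right x)
  exact (hJ.prod measurableSet_Icc).inter (hP.measurable measurableSet_Icc)

theorem mem_Lset_iff :
    x ∈ Lset k δ ↔ ∃ μ, ENNReal.ofReal δ < volume (sublevel k x μ (Icc 0 1)) := by
  rw [Lset, mem_ofPred_eq, lt_iSup_iff]
  refine exists_congr fun μ => ?_
  rw [← (volume_preserving_finTwoArrow ℝ).measure_preimage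
    (measurableSet_sublevel measurableSet_Icc).nullMeasurableSet]
  refine iff_of_eq (congrArg (_ < volume ·) (ext fun ξ => ?_))
  simp only [sublevel, Pphase, mem_ofPred_eq, mem_preimage, mem_inter_iff, mem_prod, mem_Icc,
    MeasurableEquiv.finTwoArrow_apply, Matrix.cons_val_zero, Matrix.cons_val_one, Pi.le_def,
    Fin.forall_fin_two, Pi.zero_apply, Pi.one_apply]
  tauto

theorem volume_sublevel_Icc_le_sum (hK : 0 < K) (x : Idx k → ℝ) (μ : ℝ) :
    volume (sublevel k x μ (Icc 0 1)) ≤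
      ∑ n ∈ Finset.range K, volume (sublevel k x μ (strip K n)) := by
  refine (measure_mono fun q hq => ?_).trans (measure_biUnion_finset_le _ _)
  have hq₁ := Icc_subset_iUnion_strip hK hq.1.1
  simp only [mem_iUnion, exists_prop] at hq₁ ⊢
  exact hq₁.imp fun n hn => ⟨hn.1, ⟨hn.2, hq.1.2⟩, hq.2⟩

theorem preimage_mul_add_sublevel (r c : ℝ) :
    Prod.map (fun s => r * s + c) id ⁻¹' sublevel k x μ J =
      sublevel k (Matrix.toLin' (substMatrix k r c) x) (μ - Pphase k x ![c, 0])
        ((fun s => r * s + c) ⁻¹' J) := by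
  ext q
  simp only [sublevel, mem_preimage, mem_inter_iff, mem_prod, mem_ofPred_eq, Prod.map_fst,
    Prod.map_snd, id_eq, Pphase_mul_add, mem_Icc, sub_le_iff_le_add, sub_add_eq_add_sub,
    le_sub_iff_add_le]

theorem toLin'_substMatrix_mem_Lset (hK : 0 < K) {n : ℕ}
    (h : ENNReal.ofReal δ < volume (sublevel k x μ (strip K n))) :
    Matrix.toLin' (substMatrix k (K : ℝ)⁻¹ (n / K)) x ∈ Lset k (δ * K) := by
  have hK' : (0 : ℝ) < K := Nat.cast_pos.2 hK
  refine mem_Lset_iff.2 ⟨μ - Pphase k x ![n / K, 0], ?_⟩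
  rw [← preimage_mul_add_strip hK n, ← preimage_mul_add_sublevel, volume_preimage_mul_add_prodMap
    (inv_pos.2 hK') _ (measurableSet_sublevel (measurableSet_strip K n)), inv_inv, mul_comm δ,
    ENNReal.ofReal_mul hK'.le]
  exact ENNReal.mul_lt_mul_right (by simpa using hK.ne') ENNReal.ofReal_ne_top h

/-- The points at which all vertical Taylor coefficients of `P(·; x)` of order `1 ≤ j ≤ k` are at
most `H ^ j`. -/
def slowPoints (k : ℕ) (H : ℝ) (x : Idx k → ℝ) : Set (ℝ × ℝ) :=
  {q | ∀ j, 1 ≤ j → j ≤ k → |taylorCoeff k x j q.1 q.2| ≤ H ^ j}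

theorem isClosed_setOf_mem_slowPoints (k : ℕ) (H : ℝ) :
    IsClosed {q : (Idx k → ℝ) × ℝ × ℝ | q.2 ∈ slowPoints k H q.1} := by
  simp only [slowPoints, mem_ofPred_eq]
  simp only [ofPred_forall]
  exact isClosed_iInter fun j => isClosed_iInter fun _ => isClosed_iInter fun _ =>
    isClosed_le (continuous_taylorCoeff k j).abs continuous_const

theorem measurableSet_slowPoints (k : ℕ) (H : ℝ) (x : Idx k → ℝ) :
    MeasurableSet (slowPoints k H x) :=
  ((isClosed_setOf_mem_slowPoints k H).preimage (Continuous.prodMk_right x)).measurableSet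

theorem volume_sublevel_diff_slowPoints_le (hJ : MeasurableSet J) {H : ℝ} (hH : 0 < H) :
    volume (sublevel k x μ J \ slowPoints k H x) ≤ ENNReal.ofReal (2 * k ^ 2 / H) * volume J := by
  refine measure_prod_le_mul
    ((measurableSet_sublevel hJ).diff (measurableSet_slowPoints k H x)) hJ (fun q hq => hq.1.1.1)
    fun a => ?_
  let p : Polynomial ℝ := fiberPoly k x a - Polynomial.C μ
  have hp : p.natDegree ≤ k := by
    rw [Polynomial.natDegree_sub_C]
    exact natDegree_fiberPoly_le k x a
  refine (measure_mono fun t ht => ?_).trans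
    ((volume_abs_eval_le_one_and_exists_lt_abs_hasseDeriv_le p hp hH k).trans_eq (by congr 1; ring))
  obtain ⟨⟨-, hμ⟩, hslow⟩ := ht
  simp only [slowPoints, mem_ofPred_eq, not_forall, not_le] at hμ hslow
  obtain ⟨j, hj, hjk, hlt⟩ := hslow
  refine ⟨?_, j, hjk, ?_⟩
  · rw [Polynomial.eval_sub, Polynomial.eval_C, ← Polynomial.hasseDeriv_zero' (fiberPoly k x a),
      ← taylorCoeff, taylorCoeff_zero, abs_le]
    constructor <;> linarith [hμ.1, hμ.2]
  · rwa [map_sub, Polynomial.hasseDeriv_C _ _ hj, sub_zero]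

theorem ofReal_le_volume_sublevel_inter_slowPoints (hJ : MeasurableSet J) (hJ₁ : volume J ≤ 1)
    (hk : 1 ≤ k) {η : ℝ} (hη : 0 < η) (h : ENNReal.ofReal (2 * η) < volume (sublevel k x μ J)) :
    ENNReal.ofReal η ≤ volume (sublevel k x μ J ∩ slowPoints k (2 * k ^ 2 / η) x) := by
  have : (0 : ℝ) < k := Nat.cast_pos.2 hk
  have hfast : volume (sublevel k x μ J \ slowPoints k (2 * k ^ 2 / η) x) ≤ ENNReal.ofReal η := by
    refine (volume_sublevel_diff_slowPoints_le hJ (by positivity)).trans ?_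
    rw [div_div_cancel₀ (by positivity)]
    exact mul_le_of_le_one_right' hJ₁
  refine (ENNReal.add_le_add_iff_right (ENNReal.ofReal_ne_top (r := η))).1 ?_
  calc ENNReal.ofReal η + ENNReal.ofReal η = ENNReal.ofReal (2 * η) := by
        rw [← ENNReal.ofReal_add hη.le hη.le, two_mul]
    _ ≤ volume (sublevel k x μ J ∩ slowPoints k (2 * k ^ 2 / η) x) +
          volume (sublevel k x μ J \ slowPoints k (2 * k ^ 2 / η) x) :=
        h.le.trans (measure_le_inter_add_sdiff _ _ _)
    _ ≤ volume (sublevel k x μ J ∩ slowPoints k (2 * k ^ 2 / η) x) + ENNReal.ofReal η := by gcongr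

end SublevelSets

section InterpolationDeviation

variable {ι : Type*} [LinearOrder ι] [LocallyFiniteOrderBot ι]

/-- The vertical deviation of the `i`-th point from the curve interpolating the previous ones. -/
def interpDev (p : ι → ℝ × ℝ) (i : ι) : ℝ :=
  (p i).2 - (Lagrange.interpolate (Finset.Iio i) (fun m => (p m).1) fun m => (p m).2).eval (p i).1

theorem measurable_interpDev (i : ι) : Measurable fun p : ι → ℝ × ℝ => interpDev p i :=
  (measurable_pi_apply i).snd.sub (measurable_eval_interpolate
    (fun m => (measurable_pi_apply m).fst) (fun m => (measurable_pi_apply m).snd)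
    (measurable_pi_apply i).fst)

theorem dependsOn_interpDev (i : ι) : DependsOn (fun p : ι → ℝ × ℝ => interpDev p i) (Iic i) := by
  intro p q h
  have hlt (m : ι) (hm : m ∈ Finset.Iio i) : p m = q m := h m (Finset.mem_Iio.1 hm).le
  simp only [interpDev, h i self_mem_Iic]
  rw [eval_interpolate_congr (fun m hm => congrArg Prod.fst (hlt m hm))
    fun m hm => congrArg Prod.snd (hlt m hm)]

theorem interpDev_update (p : ι → ℝ × ℝ) (i : ι) (a t : ℝ) :
    interpDev (Function.update p i (a, t)) i = t - (Lagrange.interpolate (Finset.Iio i)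
      (fun m => (p m).1) fun m => (p m).2).eval a := by
  have hne (m : ι) (hm : m ∈ Finset.Iio i) : Function.update p i (a, t) m = p m :=
    Function.update_of_ne (Finset.mem_Iio.1 hm).ne _ _
  simp only [interpDev, Function.update_self]
  rw [eval_interpolate_congr (fun m hm => congrArg Prod.fst (hne m hm))
    fun m hm => congrArg Prod.snd (hne m hm)]

theorem lintegral_interpDev_update_le {H : ℝ} (hH : 0 < H) (p : ι → ℝ × ℝ) (i : ι) :
    ∫⁻ q in Icc (0 : ℝ) 1 ×ˢ Icc (0 : ℝ) 1,
        ENNReal.ofReal (1 + H * |interpDev (Function.update p i q) i|)⁻¹ ≤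
      ENNReal.ofReal (2 * log (1 + H) / H) := by
  have hmeas : Measurable fun q : ℝ × ℝ =>
      ENNReal.ofReal (1 + H * |interpDev (Function.update p i q) i|)⁻¹ := by
    have hdev : Measurable fun q : ℝ × ℝ => interpDev (Function.update p i q) i :=
      (measurable_interpDev i).comp (measurable_update p)
    exact ((hdev.abs.const_mul H).const_add 1).inv.ennreal_ofReal
  rw [Measure.volume_eq_prod, ← Measure.prod_restrict, lintegral_prod _ hmeas.aemeasurable]
  calc _ ≤ ∫⁻ _ in Icc (0 : ℝ) 1, ENNReal.ofReal (2 * log (1 + H) / H) :=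
        lintegral_mono fun a => by
          simp only [interpDev_update]
          exact lintegral_Icc_ofReal_inv_one_add_mul_abs_sub_le hH _
    _ = ENNReal.ofReal (2 * log (1 + H) / H) := by simp

theorem lintegral_prod_interpDev_le [Fintype ι] {H : ℝ} (hH : 0 < H) (s : Finset ι) :
    ∫⁻ p, ∏ i ∈ s, ENNReal.ofReal (1 + H * |interpDev p i|)⁻¹
        ∂(Measure.pi fun _ : ι => volume.restrict (Icc (0 : ℝ) 1 ×ˢ Icc (0 : ℝ) 1)) ≤
      ENNReal.ofReal (2 * log (1 + H) / H) ^ s.card := by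
  let h (i : ι) (p : ι → ℝ × ℝ) : ℝ≥0∞ :=
    if i ∈ s then ENNReal.ofReal (1 + H * |interpDev p i|)⁻¹ else 1
  calc _ = ∫⁻ p, ∏ i, h i p
          ∂(Measure.pi fun _ : ι => volume.restrict (Icc (0 : ℝ) 1 ×ˢ Icc (0 : ℝ) 1)) := by
        simp only [h, Finset.prod_ite_mem, Finset.univ_inter]
    _ ≤ ∏ i, if i ∈ s then ENNReal.ofReal (2 * log (1 + H) / H) else 1 := by
        refine lintegral_pi_prod_le _ (fun i => ?_) (fun i p q hpq => ?_) fun i p => ?_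
        · have hdev := measurable_interpDev i
          simp only [h]
          split_ifs
          · exact ((hdev.abs.const_mul H).const_add 1).inv.ennreal_ofReal
          · exact measurable_const
        · simp only [h, dependsOn_interpDev i hpq]
        · simp only [h]
          split_ifs
          · exact lintegral_interpDev_update_le hH p i
          · simp [Measure.volume_eq_prod, -Icc_prod_Icc]
    _ = ENNReal.ofReal (2 * log (1 + H) / H) ^ s.card := by
        rw [Finset.prod_ite_mem, Finset.univ_inter, Finset.prod_const]

end InterpolationDeviation

section CoefficientBounds

variable {k : ℕ} {ι : Type*} {z : Idx k → ℝ} {β : Idx k} {κ M : ℝ} {p : ι → ℝ × ℝ}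

theorem natDegree_layerPoly_le_of_forall_lt (hz : ∀ γ < β, z γ = 0) :
    (layerPoly k z β.1.2).natDegree ≤ β.1.1 :=
  natDegree_layerPoly_le fun γ h₂ h₁ => hz γ (Idx.lt_iff.2 (.inr ⟨Fin.ext h₂.symm, h₁⟩))

-- Subtracting the constant `c` is only needed for `β₂ = 0`, where the phase itself is known up to
-- an additive constant only.
theorem abs_le_of_forall_abs_taylorCoeff_sub_le (hκ : 1 ≤ κ) (hz : ∀ γ < β, z γ = 0)
    {s : Finset ι} (hs : k + 1 ≤ s.card)
    (hp : (s : Set ι).Pairwise fun i j => κ⁻¹ ≤ |(p i).1 - (p j).1|) {c : ℝ}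
    (hc : (β.1.2 : ℕ) ≠ 0 → c = 0)
    (hM : ∀ i ∈ s, |taylorCoeff k z β.1.2 (p i).1 (p i).2 - c| ≤ M) :
    |z β| ≤ (k + 1) * κ ^ k * M := by
  have hβ := β.2
  have hM₀ : 0 ≤ M := by
    obtain ⟨i, hi⟩ := Finset.card_pos.1 (k.succ_pos.trans_le hs)
    exact (abs_nonneg _).trans (hM i hi)
  obtain ⟨u, hus, hu⟩ := Finset.exists_subset_card_eq (n := β.1.1 + 1) (by omega : _ ≤ s.card)
  let q : Polynomial ℝ := layerPoly k z β.1.2 - Polynomial.C c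
  have hcoeff : q.coeff β.1.1 = z β := by
    rw [Polynomial.coeff_sub, coeff_layerPoly, Polynomial.coeff_C]
    split_ifs with h
    · rw [hc (by omega), sub_zero]
    · rw [sub_zero]
  have hdeg : q.natDegree ≤ β.1.1 := by
    rw [Polynomial.natDegree_sub_C]
    exact natDegree_layerPoly_le_of_forall_lt hz
  have heval (i : ι) (hi : i ∈ u) : |q.eval (p i).1| ≤ M := by
    rw [Polynomial.eval_sub, Polynomial.eval_C, ← taylorCoeff_eq_eval_layerPoly
      (fun γ hγ => hz γ (Idx.lt_iff.2 (.inl hγ))) (p i).1 (p i).2]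
    exact hM i (hus hi)
  have hβk : (β.1.1 : ℕ) ≤ k := by omega
  calc |z β| = |q.coeff β.1.1| := by rw [hcoeff]
    _ ≤ ((β.1.1 : ℕ) + 1) * κ ^ (β.1.1 : ℕ) * M :=
        abs_coeff_le_of_abs_eval_le hκ (hp.mono (Finset.coe_subset.2 hus)) hu hdeg heval
    _ ≤ (k + 1) * κ ^ k * M := by gcongr

variable [LinearOrder ι] [LocallyFiniteOrderBot ι]

-- With the coefficients before `β = (0, j + 1)` vanishing, the `j`-th Taylor coefficient is a
-- polynomial of degree at most `k - j` in `ξ₁` plus `(j + 1) z_β ξ₂`; interpolation from more than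
-- `k - j` points reproduces the former.
theorem mul_interpDev_eq {i : ι} {j : ℕ} (hz : ∀ γ < β, z γ = 0) (hβ₁ : (β.1.1 : ℕ) = 0)
    (hβ₂ : (β.1.2 : ℕ) = j + 1) (hp : InjOn (fun m => (p m).1) (Finset.Iio i : Finset ι))
    (hi : k < (Finset.Iio i).card + j) :
    (j + 1) * z β * interpDev p i = taylorCoeff k z j (p i).1 (p i).2 -
      (Lagrange.interpolate (Finset.Iio i) (fun m => (p m).1)
        fun m => taylorCoeff k z j (p m).1 (p m).2).eval (p i).1 := by
  let q := layerPoly k z j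
  have hq : q.degree < (Finset.Iio i).card := by
    have hle : q.natDegree ≤ k - j := natDegree_layerPoly_le fun γ h₁ h₂ => by
      have := γ.2
      omega
    refine (Polynomial.degree_le_of_natDegree_le hle).trans_lt ?_
    have := β.2
    exact_mod_cast (by omega : k - j < (Finset.Iio i).card)
  have htop (a : ℝ) : (layerPoly k z (j + 1)).eval a = z β := by
    have hdeg := natDegree_layerPoly_le_of_forall_lt hz
    rw [← hβ₂, Polynomial.eq_C_of_natDegree_le_zero (hdeg.trans hβ₁.le), Polynomial.eval_C, ← hβ₁,
      coeff_layerPoly]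
  have htaylor (m : ι) : taylorCoeff k z j (p m).1 (p m).2 =
      q.eval (p m).1 + ((j + 1) * z β) * (p m).2 := by
    rw [taylorCoeff_eq_of_forall_succ_lt
      (fun γ hγ => hz γ (Idx.lt_iff.2 (.inl (by rw [Fin.lt_def]; omega)))), htop]
    ring
  have hinterp : (Lagrange.interpolate (Finset.Iio i) (fun m => (p m).1)
      fun m => taylorCoeff k z j (p m).1 (p m).2) =
        q + ((j + 1) * z β) • Lagrange.interpolate (Finset.Iio i) (fun m => (p m).1)
          fun m => (p m).2 := by
    rw [Lagrange.eq_interpolate hp hq, ← map_smul, ← map_add]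
    exact congrArg _ (funext htaylor)
  rw [hinterp, htaylor, Polynomial.eval_add, Polynomial.eval_smul, smul_eq_mul, interpDev]
  ring

theorem abs_mul_abs_interpDev_le {i : ι} {j : ℕ} (hκ : 1 ≤ κ) (hz : ∀ γ < β, z γ = 0)
    (hβ₁ : (β.1.1 : ℕ) = 0) (hβ₂ : (β.1.2 : ℕ) = j + 1)
    (hp : Pairwise fun i j => κ⁻¹ ≤ |(p i).1 - (p j).1|)
    (hi : k < (Finset.Iio i).card + j) (hik : (Finset.Iio i).card ≤ k + 1)
    (hp₁ : ∀ m, (p m).1 ∈ Icc (0 : ℝ) 1)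
    (hM : ∀ m, |taylorCoeff k z j (p m).1 (p m).2| ≤ M) :
    |z β| * |interpDev p i| ≤ (k + 2) * κ ^ k * M := by
  have hM₀ : 0 ≤ M := (abs_nonneg _).trans (hM i)
  have hp' := hp.set_pairwise (Finset.Iio i : Set ι)
  have hpoly : |(Lagrange.interpolate (Finset.Iio i) (fun m => (p m).1)
      fun m => taylorCoeff k z j (p m).1 (p m).2).eval (p i).1| ≤ (k + 1) * κ ^ k * M :=
    abs_eval_interpolate_le hκ hp' hik
      (fun m _ => Real.dist_le_of_mem_Icc_01 (hp₁ i) (hp₁ m)) hM₀ fun m _ => hM m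
  calc |z β| * |interpDev p i| ≤ |(j + 1) * z β * interpDev p i| := by
        rw [abs_mul, abs_mul, mul_assoc, abs_of_nonneg (by positivity : (0 : ℝ) ≤ j + 1)]
        exact le_mul_of_one_le_left (by positivity) (by simp)
    _ ≤ M + (k + 1) * κ ^ k * M := by
        rw [mul_interpDev_eq hz hβ₁ hβ₂
          (injOn_of_pairwise_inv_le_abs_sub (zero_lt_one.trans_le hκ) hp') hi]
        exact (abs_sub _ _).trans (add_le_add (hM i) hpoly)
    _ ≤ κ ^ k * M + (k + 1) * κ ^ k * M := by
        gcongr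
        exact le_mul_of_one_le_left hM₀ (one_le_pow₀ hκ)
    _ = (k + 2) * κ ^ k * M := by ring

end CoefficientBounds

section SlowConfigurations

/-- The slow configurations: pairs of coefficients `x` and `k + 1` points of the unit square with
`κ⁻¹`-separated abscissae, slow for `x`, at which `P(·; x)` takes values within `1` of each
other. -/
def slowConfig (k : ℕ) (H κ : ℝ) : Set ((Idx k → ℝ) × (Fin (k + 1) → ℝ × ℝ)) :=
  {q | (∀ i, q.2 i ∈ Icc (0 : ℝ) 1 ×ˢ Icc (0 : ℝ) 1) ∧
    (Pairwise fun i j => κ⁻¹ ≤ |(q.2 i).1 - (q.2 j).1|) ∧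
    (∀ i, q.2 i ∈ slowPoints k H q.1) ∧
    ∀ i j, |Pphase k q.1 ![(q.2 i).1, (q.2 i).2] - Pphase k q.1 ![(q.2 j).1, (q.2 j).2]| ≤ 1}

theorem isClosed_slowConfig (k : ℕ) (H κ : ℝ) : IsClosed (slowConfig k H κ) := by
  have hpoint (i : Fin (k + 1)) :
      Continuous fun q : (Idx k → ℝ) × (Fin (k + 1) → ℝ × ℝ) => (q.1, q.2 i) := by
    fun_prop
  have hphase (i : Fin (k + 1)) : Continuous fun q : (Idx k → ℝ) × (Fin (k + 1) → ℝ × ℝ) =>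
      Pphase k q.1 ![(q.2 i).1, (q.2 i).2] := (continuous_Pphase k).comp (hpoint i)
  simp only [slowConfig, Pairwise, ofPred_and, ofPred_forall]
  refine .inter ?_ (.inter ?_ (.inter ?_ ?_))
  · exact isClosed_iInter fun i => (isClosed_Icc.prod isClosed_Icc).preimage (hpoint i).snd
  · exact isClosed_iInter fun i => isClosed_iInter fun j => isClosed_iInter fun _ =>
      isClosed_le continuous_const (by fun_prop)
  · exact isClosed_iInter fun i => (isClosed_setOf_mem_slowPoints k H).preimage (hpoint i)
  · exact isClosed_iInter fun i => isClosed_iInter fun j =>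
      isClosed_le ((hphase i).sub (hphase j)).abs continuous_const

variable {k : ℕ} {H κ : ℝ} {x y : Idx k → ℝ}

theorem abs_taylorCoeff_sub_le {q : ℝ × ℝ} (hx : q ∈ slowPoints k H x) (hy : q ∈ slowPoints k H y)
    {j : ℕ} (hj : 1 ≤ j) (hjk : j ≤ k) : |taylorCoeff k (x - y) j q.1 q.2| ≤ 2 * H ^ j := by
  rw [taylorCoeff_sub, two_mul]
  exact (abs_sub _ _).trans (add_le_add (hx j hj hjk) (hy j hj hjk))

variable {p : Fin (k + 1) → ℝ × ℝ} {β : Idx k}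

theorem abs_sub_le_of_mem_slowConfig (hκ : 1 ≤ κ) (hx : (x, p) ∈ slowConfig k H κ)
    (hy : (y, p) ∈ slowConfig k H κ) (hxy : ∀ γ < β, x γ = y γ) :
    |x β - y β| ≤ (k + 1) * κ ^ k * (2 * H ^ (β.1.2 : ℕ)) := by
  obtain ⟨-, hsep, hx, hxP⟩ := hx
  obtain ⟨-, -, hy, hyP⟩ := hy
  have hz (γ) (hγ : γ < β) : (x - y) γ = 0 := sub_eq_zero.2 (hxy γ hγ)
  have := β.2
  refine abs_le_of_forall_abs_taylorCoeff_sub_le (s := Finset.univ) (p := p) (z := x - y)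
    (c := if (β.1.2 : ℕ) = 0 then taylorCoeff k (x - y) 0 (p 0).1 (p 0).2 else 0)
    hκ hz (Finset.card_fin _).ge (hsep.set_pairwise _) (fun h => if_neg h) fun i _ => ?_
  split_ifs with h
  · rw [h, taylorCoeff_sub, taylorCoeff_sub, sub_sub_sub_comm, pow_zero, mul_one]
    simp only [taylorCoeff_zero]
    exact (abs_sub _ _).trans ((add_le_add (hxP i 0) (hyP i 0)).trans_eq one_add_one_eq_two)
  · rw [sub_zero]
    exact abs_taylorCoeff_sub_le (hx i) (hy i) (by omega) (by omega)

/-- The point whose deviation from the interpolating curve constrains the coefficient of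
`ξ₂ ^ β₂`; it has index `k + 2 - β₂`, and is only meaningful for `2 ≤ β₂`. -/
def gainRow (β : Idx k) : Fin (k + 1) := Fin.ofNat (k + 1) (k + 2 - β.1.2)

theorem val_gainRow (h : 2 ≤ (β.1.2 : ℕ)) : (gainRow β : ℕ) = k + 2 - β.1.2 := by
  have := β.1.2.2
  exact Nat.mod_eq_of_lt (by omega)

theorem abs_sub_mul_abs_interpDev_le (hκ : 1 ≤ κ) (hx : (x, p) ∈ slowConfig k H κ)
    (hy : (y, p) ∈ slowConfig k H κ) (hxy : ∀ γ < β, x γ = y γ) (hβ₁ : (β.1.1 : ℕ) = 0)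
    {j : ℕ} (hβ₂ : (β.1.2 : ℕ) = j + 1) (hj : 1 ≤ j) :
    |x β - y β| * |interpDev p (gainRow β)| ≤ (k + 2) * κ ^ k * (2 * H ^ j) := by
  obtain ⟨hp, hsep, hx, -⟩ := hx
  obtain ⟨-, -, hy, -⟩ := hy
  have := β.2
  have hcard : (Finset.Iio (gainRow β)).card = k + 1 - j := by
    rw [Fin.card_Iio, val_gainRow (by omega)]
    omega
  exact abs_mul_abs_interpDev_le (z := x - y) hκ (fun γ hγ => sub_eq_zero.2 (hxy γ hγ)) hβ₁ hβ₂
    hsep (by omega) (by omega) (fun m => (hp m).1)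
    fun m => abs_taylorCoeff_sub_le (hx m) (hy m) hj (by omega)

/-- Up to a constant, the length of the range of the coefficient `x_β` in the slow configurations
at the points `p`, the coefficients of smaller index being fixed. -/
def coordBound (H : ℝ) (p : Fin (k + 1) → ℝ × ℝ) (β : Idx k) : ℝ :=
  H ^ (β.1.2 : ℕ) * if (β.1.1 : ℕ) = 0 ∧ 2 ≤ (β.1.2 : ℕ) then
    (1 + H * |interpDev p (gainRow β)|)⁻¹ else 1

theorem coordBound_nonneg (hH : 0 ≤ H) : 0 ≤ coordBound H p β := by
  unfold coordBound
  positivity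

theorem abs_sub_le_coordBound_of_mem_slowConfig (hH : 0 < H) (hκ : 1 ≤ κ)
    (hx : (x, p) ∈ slowConfig k H κ) (hy : (y, p) ∈ slowConfig k H κ)
    (hxy : ∀ γ < β, x γ = y γ) :
    |x β - y β| ≤ (4 * k + 6) * κ ^ k * coordBound H p β := by
  have hle := abs_sub_le_of_mem_slowConfig hκ hx hy hxy
  rw [coordBound]
  split_ifs with hβ
  · obtain ⟨j, hj⟩ : ∃ j, (β.1.2 : ℕ) = j + 1 := ⟨β.1.2 - 1, by omega⟩
    have hdev := abs_sub_mul_abs_interpDev_le hκ hx hy hxy hβ.1 hj (by omega)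
    rw [← mul_assoc, ← div_eq_mul_inv, le_div_iff₀ (by positivity)]
    calc |x β - y β| * (1 + H * |interpDev p (gainRow β)|)
        = |x β - y β| + H * (|x β - y β| * |interpDev p (gainRow β)|) := by ring
      _ ≤ (k + 1) * κ ^ k * (2 * H ^ (β.1.2 : ℕ)) + H * ((k + 2) * κ ^ k * (2 * H ^ j)) := by
          gcongr
      _ = (4 * k + 6) * κ ^ k * H ^ (β.1.2 : ℕ) := by rw [hj]; ring
  · calc |x β - y β| ≤ (2 * k + 2) * κ ^ k * (H ^ (β.1.2 : ℕ) * 1) := hle.trans_eq (by ring)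
      _ ≤ (4 * k + 6) * κ ^ k * (H ^ (β.1.2 : ℕ) * 1) := by gcongr <;> norm_num

theorem prod_filter_gainRow {M : Type*} [CommMonoid M] (f : Fin (k + 1) → M) :
    ∏ β : Idx k with (β.1.1 : ℕ) = 0 ∧ 2 ≤ (β.1.2 : ℕ), f (gainRow β) =
      ∏ i : Fin (k + 1) with 2 ≤ i.val, f i := by
  refine Finset.prod_nbij gainRow (fun β hβ => ?_) (fun β hβ γ hγ h => ?_) (fun i hi => ?_)
    fun _ _ => rfl
  · have hβ' := (Finset.mem_filter.1 hβ).2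
    refine Finset.mem_filter.2 ⟨Finset.mem_univ _, ?_⟩
    rw [val_gainRow hβ'.2]
    have := β.2
    omega
  · have hβ' := (Finset.mem_filter.1 hβ).2
    have hγ' := (Finset.mem_filter.1 hγ).2
    have hval := congrArg Fin.val h
    rw [val_gainRow hβ'.2, val_gainRow hγ'.2] at hval
    exact Subtype.ext (Prod.ext (Fin.ext (by omega)) (Fin.ext (by omega)))
  · have hi' := (Finset.mem_filter.1 hi).2
    have := i.2
    let β : Idx k := ⟨(0, ⟨k + 2 - i, by omega⟩), by simp; omega⟩
    have hβ : (β.1.2 : ℕ) = k + 2 - i := rfl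
    refine ⟨β, Finset.mem_coe.2 (Finset.mem_filter.2 ⟨Finset.mem_univ _, rfl, by omega⟩), ?_⟩
    refine Fin.ext ?_
    rw [val_gainRow (by omega)]
    omega

theorem prod_coordBound (H : ℝ) (p : Fin (k + 1) → ℝ × ℝ) :
    ∏ β, coordBound H p β = H ^ (∑ β : Idx k, (β.1.2 : ℕ)) *
      ∏ i : Fin (k + 1) with 2 ≤ i.val, (1 + H * |interpDev p i|)⁻¹ := by
  simp only [coordBound]
  rw [Finset.prod_mul_distrib, Finset.prod_pow_eq_pow_sum, ← Finset.prod_filter,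
    prod_filter_gainRow fun i => (1 + H * |interpDev p i|)⁻¹]

theorem card_filter_le_val (n m : ℕ) :
    (Finset.univ.filter fun i : Fin n => m ≤ i.val).card = n - m := by
  have h := Finset.card_filter_add_card_filter_not (s := Finset.univ) fun i : Fin n => i.val < m
  simp only [not_lt, Fin.card_filter_val_lt, Finset.card_fin] at h
  omega

theorem volume_slowConfig_slice_le (hH : 0 < H) (hκ : 1 ≤ κ) (p : Fin (k + 1) → ℝ × ℝ) :
    volume ((·, p) ⁻¹' slowConfig k H κ) ≤
      ENNReal.ofReal (((4 * k + 6) * κ ^ k) ^ Fintype.card (Idx k) *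
        H ^ (∑ β : Idx k, (β.1.2 : ℕ))) *
        ∏ i : Fin (k + 1) with 2 ≤ i.val, ENNReal.ofReal (1 + H * |interpDev p i|)⁻¹ := by
  have hmeas := (isClosed_slowConfig k H κ).measurableSet.preimage
    (measurable_prodMk_right (y := p))
  refine (volume_le_prod_of_abs_sub_le hmeas fun β x hx y hy hxy =>
    abs_sub_le_coordBound_of_mem_slowConfig hH hκ hx hy hxy).trans_eq ?_
  rw [← ENNReal.ofReal_prod_of_nonneg fun β _ => mul_nonneg (by positivity)
      (coordBound_nonneg hH.le), ← ENNReal.ofReal_prod_of_nonneg fun i _ => by positivity,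
    ← ENNReal.ofReal_mul (by positivity), Finset.prod_mul_distrib, prod_coordBound,
    Finset.prod_const, Finset.card_univ, mul_assoc]

theorem volume_slowConfig_le (k : ℕ) (hH : 0 < H) (hκ : 1 ≤ κ) :
    volume (slowConfig k H κ) ≤ ENNReal.ofReal (((4 * k + 6) * κ ^ k) ^ Fintype.card (Idx k) *
      H ^ (∑ β : Idx k, (β.1.2 : ℕ)) * (2 * log (1 + H) / H) ^ (k - 1)) := by
  let Q : Set (ℝ × ℝ) := Icc 0 1 ×ˢ Icc 0 1
  have hQ : MeasurableSet Q := measurableSet_Icc.prod measurableSet_Icc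
  let A : ℝ := ((4 * k + 6) * κ ^ k) ^ Fintype.card (Idx k) * H ^ (∑ β : Idx k, (β.1.2 : ℕ))
  have hA : 0 ≤ A := by positivity
  let gain (p : Fin (k + 1) → ℝ × ℝ) : ℝ≥0∞ :=
    ∏ i with 2 ≤ i.val, ENNReal.ofReal (1 + H * |interpDev p i|)⁻¹
  have hgain : Measurable gain := Finset.measurable_prod _ fun i _ =>
    (((measurable_interpDev i).abs.const_mul H).const_add 1).inv.ennreal_ofReal
  have hlog : 0 ≤ log (1 + H) := log_nonneg (by linarith)
  calc volume (slowConfig k H κ) = ∫⁻ p, volume ((·, p) ⁻¹' slowConfig k H κ) := by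
        rw [Measure.volume_eq_prod,
          Measure.prod_apply_symm (isClosed_slowConfig k H κ).measurableSet]
    _ ≤ ∫⁻ p in univ.pi fun _ => Q, ENNReal.ofReal A * gain p := by
        rw [← lintegral_indicator (.univ_pi fun _ => hQ)]
        refine lintegral_mono fun p => ?_
        by_cases hp : p ∈ univ.pi fun _ => Q
        · rw [indicator_of_mem hp]
          exact volume_slowConfig_slice_le hH hκ p
        · have hempty : (·, p) ⁻¹' slowConfig k H κ = ∅ :=
            eq_empty_of_forall_notMem fun x hx => hp fun i _ => hx.1 i
          rw [hempty, measure_empty]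
          exact zero_le
    _ = ENNReal.ofReal A * ∫⁻ p, gain p
          ∂(Measure.pi fun _ : Fin (k + 1) => (volume : Measure (ℝ × ℝ)).restrict Q) := by
        rw [lintegral_const_mul _ hgain, volume_pi, Measure.restrict_pi_pi]
    _ ≤ ENNReal.ofReal A * ENNReal.ofReal (2 * log (1 + H) / H) ^ (k - 1) := by
        gcongr
        exact (lintegral_prod_interpDev_le hH _).trans_eq (by rw [card_filter_le_val]; rfl)
    _ = ENNReal.ofReal (A * (2 * log (1 + H) / H) ^ (k - 1)) := by
        rw [ENNReal.ofReal_mul hA, ENNReal.ofReal_pow (by positivity)]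

theorem volume_setOf_ofReal_pow_le_volume_slowConfig_le (k : ℕ) {η : ℝ} (hH : 0 < H) (hκ : 1 ≤ κ)
    (hη : 0 < η) :
    volume {x | ENNReal.ofReal η ^ (k + 1) ≤ volume (Prod.mk x ⁻¹' slowConfig k H κ)} ≤
      ENNReal.ofReal (((4 * k + 6) * κ ^ k) ^ Fintype.card (Idx k) *
        H ^ (∑ β : Idx k, (β.1.2 : ℕ)) * (2 * log (1 + H) / H) ^ (k - 1) / η ^ (k + 1)) := by
  have hmeas := (isClosed_slowConfig k H κ).measurableSet
  rw [ENNReal.ofReal_div_of_pos (by positivity), ENNReal.ofReal_pow hη.le]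
  refine (meas_ge_le_lintegral_div (measurable_measure_prodMk_left hmeas).aemeasurable
    (pow_ne_zero _ (ENNReal.ofReal_pos.2 hη).ne')
    (ENNReal.pow_ne_top ENNReal.ofReal_ne_top)).trans ?_
  gcongr
  rw [← Measure.prod_apply hmeas]
  exact volume_slowConfig_le k hH hκ

end SlowConfigurations

section Recursion

theorem two_mul_le_card_filter_of_lt_sum {ι : Type*} {s : Finset ι} {f : ι → ℝ≥0∞} {n : ℕ}
    (hn : 0 < n) {δ : ℝ} (hδ : 0 < δ) (h : ENNReal.ofReal δ < ∑ i ∈ s, f i)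
    (hf : ∀ i ∈ s, f i ≤ ENNReal.ofReal (δ / (4 * n))) :
    2 * n ≤ (s.filter (ENNReal.ofReal (δ / (2 * s.card)) < f ·)).card := by
  by_contra! hlt
  have : (0 : ℝ) < n := Nat.cast_pos.2 hn
  have hs : (0 : ℝ) < s.card := by
    refine Nat.cast_pos.2 (Finset.card_pos.2 (Finset.nonempty_iff_ne_empty.2 ?_))
    rintro rfl
    simp at h
  refine absurd h (not_lt.2 ((sum_le_card_filter_lt_nsmul_add s hf
    (m := ENNReal.ofReal (δ / (2 * s.card)))).trans ?_))
  rw [← ENNReal.ofReal_nsmul, ← ENNReal.ofReal_nsmul,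
    ← ENNReal.ofReal_add (by positivity) (by positivity)]
  refine ENNReal.ofReal_le_ofReal ?_
  simp only [nsmul_eq_mul]
  calc _ ≤ ((2 * n : ℕ) : ℝ) * (δ / (4 * n)) + s.card * (δ / (2 * s.card)) := by gcongr
    _ = δ := by push_cast; field_simp; norm_num

variable {k K : ℕ} {δ : ℝ}

theorem ofReal_pow_le_volume_slowConfig (hk : 1 ≤ k) {η : ℝ} (hη : 0 < η) {x : Idx k → ℝ} {μ : ℝ}
    {f : Fin (k + 1) → ℕ} (hfK : ∀ i, f i < K) (hf : ∀ i j, i < j → f i + 2 ≤ f j)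
    (h : ∀ i, ENNReal.ofReal (2 * η) < volume (sublevel k x μ (strip K (f i)))) :
    ENNReal.ofReal η ^ (k + 1) ≤
      volume (Prod.mk x ⁻¹' slowConfig k (2 * k ^ 2 / η) K) := by
  let E (i : Fin (k + 1)) : Set (ℝ × ℝ) :=
    sublevel k x μ (strip K (f i)) ∩ slowPoints k (2 * k ^ 2 / η) x
  have hsub : univ.pi E ⊆ Prod.mk x ⁻¹' slowConfig k (2 * k ^ 2 / η) K := by
    intro p hp
    have hstrip (i) : (p i).1 ∈ strip K (f i) := (hp i (mem_univ i)).1.1.1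
    refine ⟨fun i => ⟨strip_subset_Icc (hfK i) (hstrip i), (hp i (mem_univ i)).1.1.2⟩,
      fun i j hij => ?_, fun i => (hp i (mem_univ i)).2, fun i j => ?_⟩
    · rcases hij.lt_or_gt with hij | hij
      · exact inv_le_abs_sub_of_mem_strip (hf i j hij) (hstrip i) (hstrip j)
      · rw [abs_sub_comm]
        exact inv_le_abs_sub_of_mem_strip (hf j i hij) (hstrip j) (hstrip i)
    · simpa [Real.dist_eq] using Real.dist_le_of_mem_Icc (hp i (mem_univ i)).1.2
        (hp j (mem_univ j)).1.2
  have hvol (i) : ENNReal.ofReal η ≤ volume (E i) :=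
    ofReal_le_volume_sublevel_inter_slowPoints (measurableSet_strip K (f i))
      ((measure_mono (strip_subset_Icc (hfK i))).trans (by simp)) hk hη (h i)
  calc ENNReal.ofReal η ^ (k + 1) = ∏ _i : Fin (k + 1), ENNReal.ofReal η := by simp
    _ ≤ ∏ i, volume (E i) := Finset.prod_le_prod' fun i _ => hvol i
    _ = volume (univ.pi E) := (volume_pi_pi E).symm
    _ ≤ volume (Prod.mk x ⁻¹' slowConfig k (2 * k ^ 2 / η) K) := measure_mono hsub

theorem Lset_subset (hk : 1 ≤ k) (hK : 0 < K) (hδ : 0 < δ) :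
    Lset k δ ⊆ (⋃ n ∈ Finset.range K, Matrix.toLin' (substMatrix k (K : ℝ)⁻¹ (n / K)) ⁻¹'
      Lset k (δ * K / (4 * (k + 1)))) ∪
      {x | ENNReal.ofReal (δ / (4 * K)) ^ (k + 1) ≤
        volume (Prod.mk x ⁻¹' slowConfig k (2 * k ^ 2 / (δ / (4 * K))) K)} := by
  intro x hx
  obtain ⟨μ, hμ⟩ := mem_Lset_iff.1 hx
  have : (0 : ℝ) < K := Nat.cast_pos.2 hK
  refine or_iff_not_imp_left.2 fun hrescaled => ?_
  have hthin (n : ℕ) (hn : n ∈ Finset.range K) : volume (sublevel k x μ (strip K n)) ≤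
      ENNReal.ofReal (δ / (4 * (k + 1 : ℕ))) := by
    refine not_lt.1 fun hlt => hrescaled (mem_iUnion₂.2 ⟨n, hn, ?_⟩)
    rw [mem_preimage, mul_div_right_comm, ← Nat.cast_add_one]
    exact toLin'_substMatrix_mem_Lset hK hlt
  have hcard := two_mul_le_card_filter_of_lt_sum k.succ_pos hδ
    (hμ.trans_le (volume_sublevel_Icc_le_sum hK x μ)) hthin
  obtain ⟨f, hfmem, hf⟩ := exists_mem_forall_lt_add_two_le _ hcard
  simp only [Finset.mem_filter, Finset.mem_range, Finset.card_range] at hfmem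
  refine ofReal_pow_le_volume_slowConfig (μ := μ) hk (by positivity) (fun i => (hfmem i).1) hf
    fun i => ?_
  convert (hfmem i).2 using 2
  field_simp
  norm_num

theorem exists_volume_setOf_le_volume_slowConfig_le (hk : 1 ≤ k) (hK : 0 < K) :
    ∃ C : ℝ, 0 ≤ C ∧ ∀ δ : ℝ, 0 < δ →
      volume {x | ENNReal.ofReal (δ / (4 * K)) ^ (k + 1) ≤
        volume (Prod.mk x ⁻¹' slowConfig k (2 * k ^ 2 / (δ / (4 * K))) K)} ≤
      ENNReal.ofReal (C * log (1 + 1 / δ) ^ (k - 1) *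
        (δ ^ (∑ β : Idx k, (β.1.2 : ℕ) + 2))⁻¹) := by
  have : (0 : ℝ) < K := Nat.cast_pos.2 hK
  obtain ⟨n, rfl⟩ : ∃ n, k = n + 1 := ⟨k - 1, by omega⟩
  let c : ℕ := 8 * K * (n + 1) ^ 2
  have hc : (0 : ℝ) < c := Nat.cast_pos.2 (by positivity)
  refine ⟨((4 * (n + 1 : ℕ) + 6) * (K : ℝ) ^ (n + 1)) ^ Fintype.card (Idx (n + 1)) *
    c ^ (∑ β : Idx (n + 1), (β.1.2 : ℕ)) * 2 ^ n * (4 * K) ^ (n + 2), by positivity,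
    fun δ hδ => ?_⟩
  have hH : 2 * ((n + 1 : ℕ) : ℝ) ^ 2 / (δ / (4 * K)) = c / δ := by
    simp only [c]
    push_cast
    field_simp
    norm_num
  have hlog₀ : 0 ≤ log (1 + c / δ) := log_nonneg (le_add_of_nonneg_right (by positivity))
  have hlog : log (1 + c / δ) ≤ c * log (1 + 1 / δ) := by
    rw [div_eq_mul_one_div]
    exact log_one_add_natCast_mul_le c (by positivity)
  rw [hH]
  refine (volume_setOf_ofReal_pow_le_volume_slowConfig_le (n + 1) (by positivity)
    (Nat.one_le_cast.2 hK) (by positivity)).trans (ENNReal.ofReal_le_ofReal ?_)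
  calc _ ≤ ((4 * (n + 1 : ℕ) + 6) * (K : ℝ) ^ (n + 1)) ^ Fintype.card (Idx (n + 1)) *
        (c / δ) ^ (∑ β : Idx (n + 1), (β.1.2 : ℕ)) *
        (2 * (c * log (1 + 1 / δ)) / (c / δ)) ^ n / (δ / (4 * K)) ^ (n + 2) := by
        rw [Nat.add_sub_cancel]
        gcongr
    _ = _ := by
        have hratio : 2 * (c * log (1 + 1 / δ)) / (c / δ) = 2 * log (1 + 1 / δ) * δ := by
          field_simp
        rw [hratio, Nat.add_sub_cancel]
        simp only [div_pow, mul_pow, pow_add]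
        field_simp

theorem volume_biUnion_preimage_substMatrix_le (k : ℕ) (hK : 0 < K) (L : Set (Idx k → ℝ)) :
    volume (⋃ n ∈ Finset.range K, Matrix.toLin' (substMatrix k (K : ℝ)⁻¹ (n / K)) ⁻¹' L) ≤
      (K : ℝ≥0∞) ^ (1 + ∑ β : Idx k, (β.1.1 : ℕ)) * volume L := by
  refine (measure_biUnion_finset_le _ _).trans_eq ?_
  simp only [volume_preimage_substMatrix k (inv_pos.2 (Nat.cast_pos.2 hK)), inv_inv,
    ENNReal.ofReal_natCast]
  rw [Finset.sum_const, Finset.card_range, nsmul_eq_mul, pow_add, pow_one, mul_assoc]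

theorem rpow_neg_sum_Idx_snd_add_two (k : ℕ) (hδ : 0 ≤ δ) :
    δ ^ (-((k : ℝ) * (k + 1) * (k + 2) / 6 + 2)) =
      (δ ^ (∑ β : Idx k, (β.1.2 : ℕ) + 2))⁻¹ := by
  have hsum : (6 : ℝ) * (∑ β : Idx k, (β.1.2 : ℕ) : ℕ) = k * (k + 1) * (k + 2) := by
    exact_mod_cast six_mul_sum_Idx_snd k
  rw [← hsum, mul_div_cancel_left₀ _ (by norm_num), rpow_neg hδ]
  exact_mod_cast rfl

end Recursion

theorem Lset_recursion_general (k : ℕ) (hk : 1 ≤ k) :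
    ∃ C₁ : ℝ, 0 < C₁ ∧
      ∀ K : ℕ, 0 < K →
        ∃ C₂ : ℝ, 0 ≤ C₂ ∧
          ∀ δ : ℝ, 0 < δ →
            volume (Lset k δ) ≤
              (K : ℝ≥0∞) ^ (1 + k * (k + 1) * (k + 2) / 6) *
                  volume (Lset k (δ * K / C₁)) +
                ENNReal.ofReal (C₂ * Real.log (1 + 1 / δ) ^ (k - 1) *
                  δ ^ (-((k : ℝ) * (k + 1) * (k + 2) / 6 + 2))) := by
  refine ⟨4 * (k + 1), by positivity, fun K hK => ?_⟩
  obtain ⟨C₂, hC₂, hslow⟩ := exists_volume_setOf_le_volume_slowConfig_le hk hK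
  refine ⟨C₂, hC₂, fun δ hδ => ?_⟩
  rw [rpow_neg_sum_Idx_snd_add_two k hδ.le, ← six_mul_sum_Idx_snd,
    Nat.mul_div_cancel_left _ (by norm_num), ← sum_Idx_fst]
  refine (measure_mono (Lset_subset hk hK hδ)).trans ((measure_union_le _ _).trans
    (add_le_add (volume_biUnion_preimage_substMatrix_le k hK _) ?_))
  rw [sum_Idx_fst]
  exact hslow δ hδ

/-- The recursive estimate (3.9): for every `k ≥ 2` there is `C₁ = C₁(k) > 0` such that
for every dyadic `K = 2^m ≥ 2^{10k}` there is `C₂ = C₂(k,K) < ∞` with, for all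
`δ ∈ (0,1]`,
`|L_δ| ≤ K^{1 + k(k+1)(k+2)/6} |L_{δK/C₁}| + C₂ (log₊ δ)^{k−1} δ^{−k(k+1)(k+2)/6−2}`. -/
theorem Lset_recursion (k : ℕ) (hk : 2 ≤ k) :
    ∃ C₁ : ℝ, 0 < C₁ ∧
      ∀ m K : ℕ, K = 2 ^ m → 2 ^ (10 * k) ≤ K →
        ∃ C₂ : ℝ, 0 ≤ C₂ ∧
          ∀ δ : ℝ, 0 < δ → δ ≤ 1 →
            volume (Lset k δ) ≤
              (K : ℝ≥0∞) ^ (1 + k * (k + 1) * (k + 2) / 6) *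
                  volume (Lset k (δ * K / C₁)) +
                ENNReal.ofReal (C₂ * Real.log (1 + 1 / δ) ^ (k - 1) *
                  δ ^ (-((k : ℝ) * (k + 1) * (k + 2) / 6 + 2))) := by
  obtain ⟨C₁, hC₁, h⟩ := Lset_recursion_general k (one_le_two.trans hk)
  exact ⟨C₁, hC₁, fun m K hKm _ => (h K (hKm ▸ pow_pos two_pos m)).imp
    fun _ hC₂ => ⟨hC₂.1, fun δ hδ _ => hC₂.2 δ hδ⟩⟩
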